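/- arXiv:1706.00392 — 2 statements merged into one kernel-verified Lean document; each statement's English description precedes it below -/
import Mathlib

section
/- There exists a constant C > 0 such that for all sufficiently large real x, writing y = log log x, the number of primes p ≤ x for which ω_y(p²−1) does not lie in the interval [1.5·log log y, 2.5·log log y] is at most C · π(x) / (log log y). In particular this count is o(π(x)). -/
open Filter Topology

/-- `omegay y n` is the number of distinct prime divisors `q ≤ y` of `n`. -/
noncomputable def omegay (y : ℝ) (n : ℕ) : ℕ :=
  (n.primeFactors.filter (fun q : ℕ => (q : ℝ) ≤ y)).card

section Helpers

open Finset


def sK (D R : ℕ) : Finset ℕ := (Finset.Icc 1 R).filter (fun k => Squarefree k ∧ k.Coprime D)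

noncomputable def sS (D R : ℕ) : ℝ := ∑ k ∈ sK D R, ((Nat.totient k : ℝ))⁻¹

noncomputable def sL (D R d : ℕ) : ℝ :=
  (ArithmeticFunction.moebius d : ℝ) * d *
    (∑ k ∈ (sK D R).filter (fun k => d ∣ k), ((Nat.totient k : ℝ))⁻¹) / sS D R

lemma sum_moebius_div (n : ℕ) :
    ∑ d ∈ n.divisors, (ArithmeticFunction.moebius d : ℝ) = if n = 1 then 1 else 0 := by
  have h := congrArg (fun f => f n) ArithmeticFunction.moebius_mul_coe_zeta
  simp only [ArithmeticFunction.one_apply,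
    ArithmeticFunction.coe_mul_zeta_apply] at h
  exact_mod_cast h

lemma sum_moebius_between (k l : ℕ) (hk : Squarefree k) (hl : l ∣ k) :
    ∑ d ∈ k.divisors.filter (fun d => l ∣ d), (ArithmeticFunction.moebius d : ℝ)
      = if k = l then (ArithmeticFunction.moebius l : ℝ) else 0 := by
  obtain ⟨m, rfl⟩ := hl
  have h0 : l * m ≠ 0 := hk.ne_zero
  have hl0 : l ≠ 0 := by rintro rfl; simp at h0
  have hm0 : m ≠ 0 := by rintro rfl; simp at h0
  have : (l * m).divisors.filter (fun d => l ∣ d) = m.divisors.image (fun e => l * e) := by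
    ext d
    simp only [mem_filter, Nat.mem_divisors, mem_image]
    constructor
    · rintro ⟨⟨h1, -⟩, e, rfl⟩
      exact ⟨e, ⟨Nat.dvd_of_mul_dvd_mul_left (Nat.pos_of_ne_zero hl0) h1, hm0⟩, rfl⟩
    · rintro ⟨e, ⟨h1, -⟩, rfl⟩
      exact ⟨⟨Nat.mul_dvd_mul_left _ h1, h0⟩, Dvd.intro _ rfl⟩
  rw [this, sum_image (fun a _ b _ h => Nat.eq_of_mul_eq_mul_left (Nat.pos_of_ne_zero hl0) h)]
  have hcop : Nat.Coprime l m := Nat.coprime_of_squarefree_mul hk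
  have : ∀ e ∈ m.divisors, (ArithmeticFunction.moebius (l * e) : ℝ) =
      (ArithmeticFunction.moebius l : ℝ) * (ArithmeticFunction.moebius e : ℝ) := by
    intro e he
    rw [ArithmeticFunction.isMultiplicative_moebius.map_mul_of_coprime
      (hcop.coprime_dvd_right (Nat.dvd_of_mem_divisors he))]
    push_cast; rfl
  rw [sum_congr rfl this, ← mul_sum, sum_moebius_div m]
  by_cases hm : m = 1
  · simp [hm]
  · have : l * m ≠ l := by
      intro h
      exact hm (by simpa [hl0] using h)
    simp [hm, this]

lemma mem_sK {D R k : ℕ} : k ∈ sK D R ↔ (1 ≤ k ∧ k ≤ R) ∧ Squarefree k ∧ k.Coprime D := by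
  simp [sK]

lemma sK_dvd {D R k d : ℕ} (hk : k ∈ sK D R) (hd : d ∣ k) : d ∈ sK D R := by
  rw [mem_sK] at *
  have hk0 : 0 < k := hk.1.1
  refine ⟨⟨Nat.pos_of_dvd_of_pos hd hk0, (Nat.le_of_dvd hk0 hd).trans hk.1.2⟩,
    hk.2.1.squarefree_of_dvd hd, hk.2.2.coprime_dvd_left hd⟩

lemma one_mem_sK {D R : ℕ} (hR : 1 ≤ R) : 1 ∈ sK D R := by
  rw [mem_sK]; simp [hR]

lemma sS_pos {D R : ℕ} (hR : 1 ≤ R) : 0 < sS D R := by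
  unfold sS
  apply sum_pos
  · intro k hk
    have : 0 < k := (mem_sK.1 hk).1.1
    have := Nat.totient_pos.2 this
    positivity
  · exact ⟨1, one_mem_sK hR⟩

lemma sL_one {D R : ℕ} (hR : 1 ≤ R) : sL D R 1 = 1 := by
  have := sS_pos (D := D) hR
  unfold sL
  simp only [one_dvd, filter_true]
  change _ * sS D R / sS D R = 1
  simp [this.ne']

lemma sL_abs {D R d : ℕ} (hR : 1 ≤ R) : |sL D R d| ≤ d := by
  have h0 := sS_pos (D := D) hR
  unfold sL
  have h1 : |(ArithmeticFunction.moebius d : ℝ)| ≤ 1 := by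
    exact_mod_cast ArithmeticFunction.abs_moebius_le_one
  have h2 : ∑ k ∈ (sK D R).filter (fun k => d ∣ k), ((Nat.totient k : ℝ))⁻¹ ≤ sS D R :=
    sum_le_sum_of_subset_of_nonneg (filter_subset _ _) (fun _ _ _ => by positivity)
  have h3 : 0 ≤ ∑ k ∈ (sK D R).filter (fun k => d ∣ k), ((Nat.totient k : ℝ))⁻¹ := by positivity
  rw [abs_div, abs_mul, abs_mul, abs_of_nonneg h3, abs_of_pos h0, Nat.abs_cast, div_le_iff₀ h0]
  have : |(ArithmeticFunction.moebius d : ℝ)| * (d : ℝ) ≤ d := by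
    nlinarith [Nat.cast_nonneg (α := ℝ) d]
  exact mul_le_mul this h2 h3 (Nat.cast_nonneg d)

lemma sL_inv {D R l : ℕ} (hl : l ∈ sK D R) :
    ∑ d ∈ (sK D R).filter (fun d => l ∣ d), sL D R d / d =
      (ArithmeticFunction.moebius l : ℝ) * ((Nat.totient l : ℝ))⁻¹ / sS D R := by
  have h1 : ∀ d ∈ (sK D R).filter (fun d => l ∣ d), sL D R d / d =
      (∑ k ∈ sK D R, if d ∣ k then (ArithmeticFunction.moebius d : ℝ) * ((Nat.totient k : ℝ))⁻¹ else 0) / sS D R := by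
    intro d hd
    have : (0:ℝ) < d := by exact_mod_cast (mem_sK.1 (mem_filter.1 hd).1).1.1
    unfold sL
    rw [← sum_filter, ← mul_sum]
    field_simp
  rw [sum_congr rfl h1, ← sum_div, sum_comm]
  congr 1
  have h2 : ∀ k ∈ sK D R, (∑ d ∈ (sK D R).filter (fun d => l ∣ d),
      if d ∣ k then (ArithmeticFunction.moebius d : ℝ) * ((Nat.totient k : ℝ))⁻¹ else 0) =
      if k = l then (ArithmeticFunction.moebius l : ℝ) * ((Nat.totient l : ℝ))⁻¹ else 0 := by
    intro k hk
    rw [← sum_filter, ← sum_mul]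
    by_cases hlk : l ∣ k
    · have : ((sK D R).filter (fun d => l ∣ d)).filter (fun d => d ∣ k) =
          k.divisors.filter (fun d => l ∣ d) := by
        ext d
        simp only [mem_filter, Nat.mem_divisors]
        constructor
        · rintro ⟨⟨_, h⟩, h'⟩
          exact ⟨⟨h', by have := (mem_sK.1 hk).1.1; omega⟩, h⟩
        · rintro ⟨⟨h, _⟩, h'⟩
          exact ⟨⟨sK_dvd hk h, h'⟩, h⟩
      rw [this, sum_moebius_between k l (mem_sK.1 hk).2.1 hlk]
      by_cases hkl : k = l
      · simp [hkl]
      · simp [hkl]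
    · have : ((sK D R).filter (fun d => l ∣ d)).filter (fun d => d ∣ k) = ∅ := by
        ext d
        simp only [mem_filter]
        constructor
        · rintro ⟨⟨_, h⟩, h'⟩
          exact absurd (h.trans h') hlk
        · simp
      rw [this]
      have : k ≠ l := by rintro rfl; exact hlk dvd_rfl
      simp [this]
  rw [sum_congr rfl h2]
  simp [hl]

lemma sL_quad {D R : ℕ} (hR : 1 ≤ R) :
    ∑ d ∈ sK D R, ∑ e ∈ sK D R, sL D R d * sL D R e / (Nat.lcm d e : ℝ) = (sS D R)⁻¹ := by
  have h0 := sS_pos (D := D) hR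
  have h1 : ∀ d ∈ sK D R, ∀ e ∈ sK D R, sL D R d * sL D R e / (Nat.lcm d e : ℝ) =
      ∑ l ∈ sK D R, (Nat.totient l : ℝ) * ((if l ∣ d then sL D R d / d else 0) *
        (if l ∣ e then sL D R e / e else 0)) := by
    intro d hd e he
    have hd0 : (0:ℝ) < d := by exact_mod_cast (mem_sK.1 hd).1.1
    have he0 : (0:ℝ) < e := by exact_mod_cast (mem_sK.1 he).1.1
    have hd0' : 0 < d := (mem_sK.1 hd).1.1
    have hg : (Nat.gcd d e : ℝ) * (Nat.lcm d e : ℝ) = d * e := by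
      exact_mod_cast Nat.gcd_mul_lcm d e
    have hg0 : (0:ℝ) < Nat.gcd d e := by exact_mod_cast Nat.gcd_pos_of_pos_left _ hd0'
    have hs : (Nat.gcd d e : ℝ) = ∑ l ∈ (sK D R).filter (fun l => l ∣ d ∧ l ∣ e), (Nat.totient l : ℝ) := by
      have := Nat.sum_totient (Nat.gcd d e)
      rw [← this]
      push_cast
      apply sum_congr _ (fun _ _ => rfl)
      ext l
      simp only [Nat.mem_divisors, mem_filter, Nat.dvd_gcd_iff]
      constructor
      · rintro ⟨h, _⟩
        exact ⟨sK_dvd hd h.1, h⟩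
      · rintro ⟨_, h⟩
        exact ⟨h, (Nat.gcd_pos_of_pos_left _ hd0').ne'⟩
    have : ∀ l ∈ sK D R, (Nat.totient l : ℝ) * ((if l ∣ d then sL D R d / d else 0) *
        (if l ∣ e then sL D R e / e else 0)) =
        if (l ∣ d ∧ l ∣ e) then (Nat.totient l : ℝ) * (sL D R d / d * (sL D R e / e)) else 0 := by
      intro l _
      by_cases h1 : l ∣ d <;> by_cases h2 : l ∣ e <;> simp [h1, h2]
    rw [sum_congr rfl this, ← sum_filter, ← sum_mul, ← hs]
    have hl0 : (Nat.lcm d e : ℝ) ≠ 0 := by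
      intro h; rw [h] at hg; simp at hg; rcases hg with h | h <;> simp [h] at hd0 he0
    field_simp
    linear_combination (-1 : ℝ) * (sL D R d * sL D R e) * hg
  rw [sum_congr rfl (fun d hd => sum_congr rfl (h1 d hd))]
  have h2 : ∑ d ∈ sK D R, ∑ e ∈ sK D R, ∑ l ∈ sK D R, (Nat.totient l : ℝ) *
      ((if l ∣ d then sL D R d / d else 0) * (if l ∣ e then sL D R e / e else 0)) =
      ∑ l ∈ sK D R, (Nat.totient l : ℝ) *
        (∑ d ∈ (sK D R).filter (fun d => l ∣ d), sL D R d / d) ^ 2 := by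
    rw [sum_congr rfl (fun d _ => sum_comm), sum_comm]
    apply sum_congr rfl
    intro l _
    rw [sq, sum_filter, sum_mul_sum, mul_sum]
    apply sum_congr rfl
    intro d _
    rw [mul_sum]
  rw [h2]
  have h3 : ∀ l ∈ sK D R, (Nat.totient l : ℝ) *
        (∑ d ∈ (sK D R).filter (fun d => l ∣ d), sL D R d / d) ^ 2 =
        ((Nat.totient l : ℝ))⁻¹ / (sS D R) ^ 2 := by
    intro l hl
    rw [sL_inv hl]
    have h4 : (ArithmeticFunction.moebius l : ℝ) ^ 2 = 1 := by
      exact_mod_cast ArithmeticFunction.moebius_sq_eq_one_of_squarefree (mem_sK.1 hl).2.1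
    have h5 : (0:ℝ) < Nat.totient l := by exact_mod_cast Nat.totient_pos.2 (mem_sK.1 hl).1.1
    rw [div_pow, mul_pow, h4]
    field_simp
  rw [sum_congr rfl h3, ← sum_div]
  change sS D R / _ = _
  field_simp

lemma count_ap (D N a m : ℕ) (hD : 0 < D) (hm : 0 < m) (hc : m.Coprime D) :
    |(((Finset.Ioc 0 N).filter (fun n => n ≡ a [MOD D] ∧ m ∣ n)).card : ℝ) - N / (D * m)| ≤ 1 := by
  obtain ⟨c, hc1, hc2⟩ := Nat.chineseRemainder hc.symm a 0
  have h1 : (Finset.Ioc 0 N).filter (fun n => n ≡ a [MOD D] ∧ m ∣ n) =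
      (Finset.Ioc 0 N).filter (fun n => n ≡ c [MOD (D * m)]) := by
    apply filter_congr
    intro n _
    rw [← Nat.modEq_and_modEq_iff_modEq_mul hc.symm, ← Nat.modEq_zero_iff_dvd]
    constructor
    · rintro ⟨h, h'⟩; exact ⟨h.trans hc1.symm, h'.trans hc2.symm⟩
    · rintro ⟨h, h'⟩; exact ⟨h.trans hc1, h'.trans hc2⟩
  rw [h1]
  have hp : 0 < D * m := Nat.mul_pos hD hm
  have h2 := Nat.Ioc_filter_modEq_card 0 N hp c
  set X := ((Finset.Ioc 0 N).filter (fun n => n ≡ c [MOD (D * m)])).card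
  set A : ℚ := ((N:ℚ) - c) / ((D * m : ℕ) : ℚ) with hA
  set B : ℚ := (((0:ℕ):ℚ) - c) / ((D * m : ℕ) : ℚ) with hB
  have hmono : ⌊B⌋ ≤ ⌊A⌋ := by
    apply Int.floor_le_floor
    rw [hA, hB]
    gcongr
    simp
  have h3 : (X : ℤ) = ⌊A⌋ - ⌊B⌋ := by rw [h2]; exact max_eq_left (by omega)
  have hp' : (0:ℚ) < ((D * m : ℕ) : ℚ) := by exact_mod_cast hp
  have h4 : A - B = (N : ℚ) / (D * m) := by
    rw [hA, hB]; push_cast; field_simp; ring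
  have h5 : |(X : ℚ) - (N : ℚ) / (D * m)| ≤ 1 := by
    have : (X : ℚ) = (⌊A⌋ : ℚ) - ⌊B⌋ := by exact_mod_cast h3
    rw [this, ← h4, abs_le]
    constructor <;> linarith [Int.floor_le A, Int.floor_le B, Int.lt_floor_add_one A, Int.lt_floor_add_one B]
  have h6 : ((|(X : ℚ) - (N : ℚ) / (D * m)| : ℚ) : ℝ) ≤ ((1 : ℚ) : ℝ) := Rat.cast_le.2 h5
  push_cast at h6
  exact h6

theorem sieve_bound (D R N a : ℕ) (hD : 0 < D) (hR : 1 ≤ R) :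
    (((Finset.Ioc 0 N).filter (fun p => R < p ∧ p.Prime ∧ p ≡ a [MOD D])).card : ℝ) ≤
      N / D * (sS D R)⁻¹ + (R : ℝ) ^ 4 := by
  have h1 : (((Finset.Ioc 0 N).filter (fun p => R < p ∧ p.Prime ∧ p ≡ a [MOD D])).card : ℝ) ≤
      ∑ n ∈ (Finset.Ioc 0 N).filter (fun n => n ≡ a [MOD D]),
        (∑ d ∈ sK D R, if d ∣ n then sL D R d else 0) ^ 2 := by
    rw [card_eq_sum_ones]
    push_cast
    have : ∀ p ∈ (Finset.Ioc 0 N).filter (fun p => R < p ∧ p.Prime ∧ p ≡ a [MOD D]),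
        (1:ℝ) = (∑ d ∈ sK D R, if d ∣ p then sL D R d else 0) ^ 2 := by
      intro p hp
      simp only [mem_filter] at hp
      have : ∑ d ∈ sK D R, (if d ∣ p then sL D R d else 0) = 1 := by
        rw [sum_eq_single_of_mem 1 (one_mem_sK hR)]
        · simp [sL_one hR]
        · intro d hd hd1
          rw [if_neg]
          intro hdp
          rcases (Nat.dvd_prime hp.2.2.1).1 hdp with h | h
          · exact hd1 h
          · have := (mem_sK.1 hd).1.2; omega
      rw [this]; norm_num
    rw [sum_congr rfl this]
    apply sum_le_sum_of_subset_of_nonneg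
    · intro p hp
      simp only [mem_filter] at hp ⊢
      exact ⟨hp.1, hp.2.2.2⟩
    · intros; positivity
  refine h1.trans ?_
  have h2 : ∑ n ∈ (Finset.Ioc 0 N).filter (fun n => n ≡ a [MOD D]),
        (∑ d ∈ sK D R, if d ∣ n then sL D R d else 0) ^ 2 =
      ∑ d ∈ sK D R, ∑ e ∈ sK D R, sL D R d * sL D R e *
        (((Finset.Ioc 0 N).filter (fun n => n ≡ a [MOD D] ∧ Nat.lcm d e ∣ n)).card : ℝ) := by
    simp_rw [sq, sum_mul_sum]
    rw [sum_comm]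
    apply sum_congr rfl; intro d _
    rw [sum_comm]
    apply sum_congr rfl; intro e _
    rw [← filter_filter, card_eq_sum_ones]
    push_cast
    rw [mul_sum, sum_filter (p := fun n => Nat.lcm d e ∣ n)]
    apply sum_congr rfl; intro n _
    by_cases h1 : d ∣ n <;> by_cases h2 : e ∣ n <;> simp [h1, h2, Nat.lcm_dvd_iff]
  rw [h2]
  have h3 : ∀ d ∈ sK D R, ∀ e ∈ sK D R, sL D R d * sL D R e *
        (((Finset.Ioc 0 N).filter (fun n => n ≡ a [MOD D] ∧ Nat.lcm d e ∣ n)).card : ℝ) ≤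
        (N / D) * (sL D R d * sL D R e / (Nat.lcm d e : ℝ)) + R * R := by
    intro d hd e he
    have hd' := mem_sK.1 hd
    have he' := mem_sK.1 he
    have hl : 0 < Nat.lcm d e := Nat.lcm_pos hd'.1.1 he'.1.1
    have hc : (Nat.lcm d e).Coprime D :=
      Nat.Coprime.coprime_dvd_left (Nat.lcm_dvd_mul d e) (Nat.Coprime.mul_left hd'.2.2 he'.2.2)
    have := count_ap D N a (Nat.lcm d e) hD hl hc
    set X := (((Finset.Ioc 0 N).filter (fun n => n ≡ a [MOD D] ∧ Nat.lcm d e ∣ n)).card : ℝ)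
    have e1 : sL D R d * sL D R e * X = (N / D) * (sL D R d * sL D R e / (Nat.lcm d e : ℝ)) +
        (sL D R d * sL D R e) * (X - N / (D * (Nat.lcm d e : ℝ))) := by
      have : (Nat.lcm d e : ℝ) ≠ 0 := by exact_mod_cast hl.ne'
      have : (D : ℝ) ≠ 0 := by exact_mod_cast hD.ne'
      field_simp
      ring
    rw [e1]
    refine add_le_add le_rfl ?_
    refine (le_abs_self _).trans ?_
    rw [abs_mul, abs_mul]
    have a1 : |sL D R d| ≤ R := (sL_abs hR).trans (by exact_mod_cast hd'.1.2)
    have a2 : |sL D R e| ≤ R := (sL_abs hR).trans (by exact_mod_cast he'.1.2)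
    have a3 : |sL D R d| * |sL D R e| ≤ R * R := mul_le_mul a1 a2 (abs_nonneg _) (by positivity)
    calc _ ≤ ((R:ℝ) * R) * 1 := mul_le_mul a3 this (abs_nonneg _) (by positivity)
      _ = _ := by ring
  refine (sum_le_sum (fun d hd => sum_le_sum (h3 d hd))).trans ?_
  simp_rw [sum_add_distrib, ← mul_sum]
  rw [sL_quad hR]
  gcongr
  simp only [sum_const, nsmul_eq_mul]
  have hcard : ((sK D R).card : ℝ) ≤ R := by
    have : (sK D R).card ≤ (Finset.Icc 1 R).card := card_le_card (filter_subset _ _)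
    simp at this
    exact_mod_cast this
  have : (0:ℝ) ≤ (sK D R).card := by positivity
  calc (R : ℝ) * ((sK D R).card * ((sK D R).card * (R:ℝ))) ≤ R * (R * (R * R)) := by gcongr
    _ = _ := by ring

lemma sum_inv_sq_le (R : ℕ) : ∑ m ∈ Finset.Icc 1 R, ((m : ℝ) ^ 2)⁻¹ ≤ 2 := by
  have h : ∀ n : ℕ, ∑ m ∈ Finset.Icc 1 (n + 1), ((m : ℝ) ^ 2)⁻¹ ≤ 2 - 1 / ((n : ℝ) + 1) := by
    intro n
    induction n with
    | zero => norm_num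
    | succ n ih =>
      rw [Finset.sum_Icc_succ_top (by omega)]
      have : (((n + 1 + 1 : ℕ) : ℝ) ^ 2)⁻¹ ≤ 1 / ((n : ℝ) + 1) - 1 / (((n + 1 : ℕ) : ℝ) + 1) := by
        push_cast
        rw [div_sub_div _ _ (by positivity) (by positivity), inv_eq_one_div,
          div_le_div_iff₀ (by positivity) (by positivity)]
        nlinarith
      linarith
  cases R with
  | zero => norm_num
  | succ n => exact (h n).trans (by have : (0:ℝ) ≤ 1 / ((n : ℝ) + 1) := by positivity
                                    linarith)

lemma log_le_sS_one (R : ℕ) : Real.log R / 2 ≤ sS 1 R := by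
  have h1 : Real.log R ≤ ∑ n ∈ Finset.Icc 1 R, ((n : ℝ))⁻¹ := by
    have := log_le_harmonic_floor (R : ℝ) (Nat.cast_nonneg R)
    rw [Nat.floor_natCast, harmonic_eq_sum_Icc] at this
    push_cast at this
    exact this
  have h2 : ∑ n ∈ Finset.Icc 1 R, ((n : ℝ))⁻¹ ≤
      ∑ z ∈ (Finset.Icc 1 R) ×ˢ (sK 1 R), ((z.1 : ℝ) ^ 2 * z.2)⁻¹ := by
    have hsub : Finset.Icc 1 R ⊆ ((Finset.Icc 1 R) ×ˢ (sK 1 R)).image (fun z => z.1 ^ 2 * z.2) := by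
      intro n hn
      obtain ⟨a, b, hab, ha⟩ := Nat.sq_mul_squarefree n
      rw [Finset.mem_Icc] at hn
      have ha0 : 0 < a := Nat.pos_of_ne_zero (by rintro rfl; simp at hab; omega)
      have hb0 : 0 < b := Nat.pos_of_ne_zero (by rintro rfl; simp at hab; omega)
      have hbn : b ≤ n := by nlinarith
      have han : a ≤ n := by nlinarith [Nat.pow_pos (n := 2) hb0]
      refine Finset.mem_image.2 ⟨(b, a), ?_, hab⟩
      rw [Finset.mem_product, Finset.mem_Icc, mem_sK]
      exact ⟨⟨hb0, by simp; omega⟩, ⟨ha0, by simp; omega⟩, ha, Nat.coprime_one_right _⟩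
    refine (sum_le_sum_of_subset_of_nonneg hsub (fun _ _ _ => by positivity)).trans ?_
    have := Finset.sum_image_le_of_nonneg (s := (Finset.Icc 1 R) ×ˢ (sK 1 R))
      (g := fun z : ℕ × ℕ => z.1 ^ 2 * z.2) (f := fun n : ℕ => ((n : ℝ))⁻¹)
      (fun _ _ => by positivity)
    simpa using this
  have h3 : ∑ z ∈ (Finset.Icc 1 R) ×ˢ (sK 1 R), ((z.1 : ℝ) ^ 2 * z.2)⁻¹ =
      (∑ m ∈ Finset.Icc 1 R, ((m : ℝ) ^ 2)⁻¹) * ∑ k ∈ sK 1 R, ((k : ℝ))⁻¹ := by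
    rw [sum_mul_sum, sum_product]
    simp [mul_comm]
  have h4 : ∑ k ∈ sK 1 R, ((k : ℝ))⁻¹ ≤ sS 1 R := by
    apply sum_le_sum
    intro k hk
    have : 0 < k.totient := Nat.totient_pos.2 (mem_sK.1 hk).1.1
    have h' : (k.totient : ℝ) ≤ k := by exact_mod_cast Nat.totient_le k
    have : (0:ℝ) < k.totient := by exact_mod_cast this
    gcongr
  have h5 := sum_inv_sq_le R
  have h7 : 0 ≤ ∑ k ∈ sK 1 R, ((k : ℝ))⁻¹ := by positivity
  rw [h3] at h2
  nlinarith

lemma sS_split (D R : ℕ) (hD : D ≠ 0) :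
    sS 1 R ≤ (∑ l ∈ D.divisors, ((l.totient : ℝ))⁻¹) * sS D R := by
  unfold sS
  rw [sum_mul_sum, ← sum_product (s := D.divisors) (t := sK D R)
    (f := fun z : ℕ × ℕ => ((z.1.totient : ℝ))⁻¹ * ((z.2.totient : ℝ))⁻¹)]
  have hsub : sK 1 R ⊆ (D.divisors ×ˢ (sK D R)).image (fun z => z.1 * z.2) := by
    intro k hk
    have hk' := mem_sK.1 hk
    have hg : Nat.gcd k D * (k / Nat.gcd k D) = k := Nat.mul_div_cancel' (Nat.gcd_dvd_left k D)
    refine mem_image.2 ⟨(Nat.gcd k D, k / Nat.gcd k D), ?_, hg⟩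
    rw [mem_product, Nat.mem_divisors]
    refine ⟨⟨Nat.gcd_dvd_right k D, hD⟩, ?_⟩
    have h1 := mem_sK.1 (sK_dvd hk (Nat.div_dvd_of_dvd (Nat.gcd_dvd_left k D)))
    rw [mem_sK]
    refine ⟨h1.1, h1.2.1, ?_⟩
    have hc : Nat.Coprime (Nat.gcd k D) (k / Nat.gcd k D) := by
      apply Nat.coprime_of_squarefree_mul
      rw [hg]; exact hk'.2.1
    apply Nat.coprime_of_dvd
    intro p hp hp1 hp2
    have hpk : p ∣ k := hp1.trans (Nat.div_dvd_of_dvd (Nat.gcd_dvd_left k D))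
    exact Nat.not_coprime_of_dvd_of_dvd hp.one_lt (Nat.dvd_gcd hpk hp2) hp1 hc
  refine (sum_le_sum_of_subset_of_nonneg hsub (fun _ _ _ => by positivity)).trans ?_
  refine (Finset.sum_image_le_of_nonneg (s := D.divisors ×ˢ (sK D R))
      (g := fun z : ℕ × ℕ => z.1 * z.2) (f := fun n : ℕ => ((n.totient : ℝ))⁻¹)
      (fun _ _ => by positivity)).trans ?_
  apply le_of_eq
  apply sum_congr rfl
  rintro ⟨l, m⟩ hz
  rw [mem_product, Nat.mem_divisors] at hz
  have : Nat.Coprime l m := ((mem_sK.1 hz.2).2.2.coprime_dvd_right hz.1.1).symm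
  simp only [Nat.totient_mul this]
  push_cast
  rw [mul_inv]

lemma sum_div_totient (P : Finset ℕ) (hP : ∀ p ∈ P, p.Prime) :
    ∑ l ∈ (∏ p ∈ P, p).divisors, ((l.totient : ℝ))⁻¹ = ∏ p ∈ P, (1 + ((p : ℝ) - 1)⁻¹) := by
  let f : ArithmeticFunction ℝ := ⟨fun n => ((n.totient : ℝ))⁻¹, by simp⟩
  have hf : f.IsMultiplicative := by
    refine ⟨by simp [f], ?_⟩
    intro m n h
    simp [f, Nat.totient_mul h, mul_comm]
  have hsq : Squarefree (∏ p ∈ P, p) := by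
    apply Finset.squarefree_prod_of_pairwise_isCoprime
    · intro a ha b hb hab
      exact Nat.coprime_iff_isRelPrime.1 ((Nat.coprime_primes (hP a ha) (hP b hb)).2 hab)
    · intro p hp; exact (hP p hp).prime.squarefree
  have h := hf.prodPrimeFactors_one_add_of_squarefree hsq
  rw [Nat.primeFactors_prod hP] at h
  change ∏ p ∈ P, (1 + ((p.totient : ℝ))⁻¹) = _ at h
  change _ = ∑ l ∈ (∏ p ∈ P, p).divisors, ((l.totient : ℝ))⁻¹ at h
  rw [← h]
  apply prod_congr rfl
  intro p hp
  rw [Nat.totient_prime (hP p hp), Nat.cast_sub (hP p hp).one_le]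
  simp

lemma log_le_prod_mul_sS (P : Finset ℕ) (hP : ∀ p ∈ P, p.Prime) (R : ℕ) :
    Real.log R / 2 ≤ (∏ p ∈ P, (1 + ((p : ℝ) - 1)⁻¹)) * sS (∏ p ∈ P, p) R := by
  rw [← sum_div_totient P hP]
  exact (log_le_sS_one R).trans (sS_split _ _ (Finset.prod_ne_zero_iff.2 fun p hp => (hP p hp).ne_zero))

lemma mertens_lower (R : ℕ) (hR : 2 ≤ R) :
    Real.log (Real.log R / 2) ≤ ∑ p ∈ R.primesLE, ((p : ℝ) - 1)⁻¹ := by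
  have h := log_le_prod_mul_sS R.primesLE (fun p hp => Nat.prime_of_mem_primesLE hp) R
  have hK : sK (∏ p ∈ R.primesLE, p) R = {1} := by
    ext k
    rw [mem_sK, mem_singleton]
    constructor
    · rintro ⟨h1, -, h2⟩
      by_contra hk
      obtain ⟨p, hp, hpk⟩ := Nat.exists_prime_and_dvd hk
      have hpR : p ∈ R.primesLE := by
        rw [Nat.mem_primesLE]
        exact ⟨(Nat.le_of_dvd h1.1 hpk).trans h1.2, hp⟩
      exact Nat.not_coprime_of_dvd_of_dvd hp.one_lt hpk (dvd_prod_of_mem _ hpR) h2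
    · rintro rfl
      simp; omega
  have hS : sS (∏ p ∈ R.primesLE, p) R = 1 := by
    unfold sS; rw [hK]; simp
  rw [hS, mul_one] at h
  have hl : 0 < Real.log R := Real.log_pos (by exact_mod_cast hR)
  have hpos : ∀ p ∈ R.primesLE, (0:ℝ) < 1 + ((p : ℝ) - 1)⁻¹ := by
    intro p hp
    have : (1:ℝ) < p := by exact_mod_cast (Nat.prime_of_mem_primesLE hp).one_lt
    have : 0 < ((p : ℝ) - 1)⁻¹ := by apply inv_pos.2; linarith
    linarith
  refine (Real.log_le_log (by positivity) h).trans ?_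
  rw [Real.log_prod (fun p hp => (hpos p hp).ne')]
  apply sum_le_sum
  intro p hp
  have := Real.log_le_sub_one_of_pos (hpos p hp)
  linarith

lemma sum_floor_log_le (n : ℕ) :
    ∑ p ∈ n.primesLE, ((n / p : ℕ) : ℝ) * Real.log p ≤ n * Real.log n := by
  have h1 : ∀ p ∈ n.primesLE, ((n / p : ℕ) : ℝ) * Real.log p =
      ∑ m ∈ Finset.Ioc 0 n, if p ∣ m then Real.log p else 0 := by
    intro p _
    rw [← sum_filter, sum_const, Nat.Ioc_filter_dvd_card_eq_div, nsmul_eq_mul]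
  rw [sum_congr rfl h1, sum_comm]
  have h2 : ∀ m ∈ Finset.Ioc 0 n, (∑ p ∈ n.primesLE, if p ∣ m then Real.log p else 0) ≤
      Real.log n := by
    intro m hm
    rw [Finset.mem_Ioc] at hm
    rw [← sum_filter]
    have : n.primesLE.filter (fun p => p ∣ m) = m.primeFactors := by
      ext p
      rw [mem_filter, Nat.mem_primesLE, Nat.mem_primeFactors]
      constructor
      · rintro ⟨⟨_, h⟩, h'⟩; exact ⟨h, h', by omega⟩
      · rintro ⟨h, h', _⟩; exact ⟨⟨(Nat.le_of_dvd hm.1 h').trans hm.2, h⟩, h'⟩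
    rw [this, ← Real.log_prod (fun p hp => by
      exact_mod_cast (Nat.prime_of_mem_primeFactors hp).ne_zero)]
    apply Real.log_le_log
    · apply prod_pos; intro p hp; exact_mod_cast (Nat.prime_of_mem_primeFactors hp).pos
    · have := Nat.le_of_dvd hm.1 (Nat.prod_primeFactors_dvd m)
      have h' : ((∏ p ∈ m.primeFactors, p : ℕ) : ℝ) ≤ n := by exact_mod_cast this.trans hm.2
      push_cast at h'
      exact h'
  refine (sum_le_sum h2).trans ?_
  simp

lemma mertens_one (n : ℕ) (hn : 1 ≤ n) :
    ∑ p ∈ n.primesLE, Real.log p / p ≤ Real.log n + Real.log 4 := by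
  have hn0 : (0:ℝ) < n := by exact_mod_cast hn
  have h1 := sum_floor_log_le n
  have h2 := Chebyshev.theta_le_log4_mul_x (x := (n:ℝ)) hn0.le
  rw [Chebyshev.theta_eq_sum_primesLE_log] at h2
  have h3 : n * ∑ p ∈ n.primesLE, Real.log p / p ≤
      ∑ p ∈ n.primesLE, ((n / p : ℕ) : ℝ) * Real.log p + ∑ p ∈ n.primesLE, Real.log p := by
    rw [mul_sum, ← sum_add_distrib]
    apply sum_le_sum
    intro p hp
    have hpp := Nat.prime_of_mem_primesLE hp
    have hp0 : (0:ℝ) < p := by exact_mod_cast hpp.pos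
    have hl : 0 ≤ Real.log p := Real.log_natCast_nonneg p
    have : (n : ℝ) / p ≤ ((n / p : ℕ) : ℝ) + 1 := by
      have := Nat.lt_floor_add_one ((n : ℝ) / p)
      rw [Nat.floor_div_natCast, Nat.floor_natCast] at this
      exact this.le
    calc (n : ℝ) * (Real.log p / p) = (n / p) * Real.log p := by ring
      _ ≤ (((n / p : ℕ) : ℝ) + 1) * Real.log p := by gcongr
      _ = _ := by ring
  have h4 : n * ∑ p ∈ n.primesLE, Real.log p / p ≤ n * (Real.log n + Real.log 4) := by linarith
  exact le_of_mul_le_mul_left h4 hn0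

lemma primesLE_succ_sum (n : ℕ) (f : ℕ → ℝ) :
    ∑ p ∈ (n + 1).primesLE, f p = ∑ p ∈ n.primesLE, f p + if (n + 1).Prime then f (n + 1) else 0 := by
  rw [Nat.primesLE_eq_filter_range, Nat.primesLE_eq_filter_range, sum_filter, sum_filter,
    Finset.sum_range_succ]

lemma mertens_aux (n : ℕ) (hn : 2 ≤ n) :
    ∑ p ∈ n.primesLE, ((p : ℝ))⁻¹ - (∑ p ∈ n.primesLE, Real.log p / p) / Real.log n ≤
      Real.log (Real.log n) - Real.log 4 / Real.log n +
        (Real.log 4 / Real.log 2 - Real.log (Real.log 2)) := by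
  induction n, hn using Nat.le_induction with
  | base =>
    have : Nat.primesLE 2 = {2} := by decide
    have h2 : (0:ℝ) < Real.log 2 := Real.log_pos (by norm_num)
    rw [this]
    simp
    field_simp
    simp
  | succ n hn ih =>
    rw [primesLE_succ_sum, primesLE_succ_sum]
    set A := ∑ p ∈ n.primesLE, Real.log p / p with hA
    have hA' : A ≤ Real.log n + Real.log 4 := mertens_one n (by omega)
    have hn0 : (0:ℝ) < n := by exact_mod_cast (by omega : 0 < n)
    have l1 : 0 < Real.log n := Real.log_pos (by exact_mod_cast hn)
    have l2 : Real.log n < Real.log ((n + 1 : ℕ) : ℝ) :=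
      Real.log_lt_log hn0 (by push_cast; linarith)
    set a := Real.log n with ha
    set b := Real.log ((n + 1 : ℕ) : ℝ) with hb
    have hb0 : 0 < b := l1.trans l2
    have e1 : (if (n + 1).Prime then (((n + 1 : ℕ) : ℝ))⁻¹ else 0) =
        (if (n + 1).Prime then Real.log ((n + 1 : ℕ) : ℝ) / ((n + 1 : ℕ) : ℝ) else 0) / b := by
      split_ifs
      · rw [← hb]; field_simp
      · simp
    rw [e1, add_div]
    have h3 : A * (1 / a - 1 / b) ≤ (a + Real.log 4) * (1 / a - 1 / b) := by
      apply mul_le_mul_of_nonneg_right hA'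
      have := one_div_le_one_div_of_le l1 l2.le
      linarith
    have h4 : 1 - a / b ≤ Real.log b - Real.log a := by
      have := Real.log_le_sub_one_of_pos (div_pos l1 hb0)
      rw [Real.log_div l1.ne' hb0.ne'] at this
      linarith
    have e2 : A * (1 / a - 1 / b) = A / a - A / b := by ring
    have e3 : (a + Real.log 4) * (1 / a - 1 / b) =
        (1 - a / b) + (Real.log 4 / a - Real.log 4 / b) := by
      field_simp
    rw [e2, e3] at h3
    linarith

lemma mertens_upper : ∃ C : ℝ, ∀ n : ℕ, 2 ≤ n →
    ∑ p ∈ n.primesLE, ((p : ℝ) - 1)⁻¹ ≤ Real.log (Real.log n) + C := by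
  refine ⟨(Real.log 4 / Real.log 2 - Real.log (Real.log 2)) + 1 + 4, fun n hn => ?_⟩
  have h1 := mertens_aux n hn
  have h2 := mertens_one n (by omega)
  have l1 : 0 < Real.log n := Real.log_pos (by exact_mod_cast hn)
  have h3 : (∑ p ∈ n.primesLE, Real.log p / p) / Real.log n ≤ 1 + Real.log 4 / Real.log n := by
    rw [div_le_iff₀ l1]
    field_simp
    exact h2
  have h4 : ∑ p ∈ n.primesLE, ((p : ℝ) - 1)⁻¹ ≤
      ∑ p ∈ n.primesLE, ((p : ℝ))⁻¹ + 2 * ∑ p ∈ n.primesLE, ((p : ℝ) ^ 2)⁻¹ := by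
    rw [mul_sum, ← sum_add_distrib]
    apply sum_le_sum
    intro p hp
    have hp2 : (2:ℝ) ≤ p := by exact_mod_cast (Nat.prime_of_mem_primesLE hp).two_le
    have hp0 : (0:ℝ) < p := by linarith
    have hp1 : (0:ℝ) < (p:ℝ) - 1 := by linarith
    have : (p : ℝ)⁻¹ + 2 * ((p : ℝ) ^ 2)⁻¹ = (p + 2) / p ^ 2 := by field_simp
    rw [this, inv_eq_one_div, div_le_div_iff₀ hp1 (by positivity)]
    nlinarith
  have h5 : ∑ p ∈ n.primesLE, ((p : ℝ) ^ 2)⁻¹ ≤ 2 := by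
    refine le_trans ?_ (sum_inv_sq_le n)
    apply sum_le_sum_of_subset_of_nonneg
    · intro p hp
      rw [Nat.mem_primesLE] at hp
      rw [Finset.mem_Icc]
      exact ⟨hp.2.one_le, hp.1⟩
    · intros; positivity
  linarith

lemma cheb {α : Type*} (s : Finset α) (X : α → ℝ) (p : α → Prop) [DecidablePred p] (t : ℝ)
    (ht : 0 < t) (h : ∀ a ∈ s, p a → t ≤ |X a|) :
    ((s.filter p).card : ℝ) * t ^ 2 ≤ ∑ a ∈ s, X a ^ 2 := by
  calc ((s.filter p).card : ℝ) * t ^ 2 = ∑ a ∈ s.filter p, t ^ 2 := by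
        rw [sum_const, nsmul_eq_mul]
    _ ≤ ∑ a ∈ s.filter p, X a ^ 2 := by
        apply sum_le_sum
        intro a ha
        rw [mem_filter] at ha
        rw [← sq_abs (X a)]
        exact pow_le_pow_left₀ ht.le (h a ha.1 ha.2) 2
    _ ≤ _ := sum_le_sum_of_subset_of_nonneg (filter_subset _ _) (fun _ _ _ => sq_nonneg _)

lemma second_moment {ι : Type*} [Fintype ι] [DecidableEq ι] (T : ι → Finset ℕ)
    (h : ι → ℕ → ℝ) (v : ι → ℝ) (h0 : ∀ i, ∑ r ∈ T i, h i r = 0)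
    (hv : ∀ i, ∑ r ∈ T i, h i r ^ 2 ≤ v i * (T i).card) :
    ∑ f ∈ Fintype.piFinset T, (∑ i, h i (f i)) ^ 2 ≤ (∑ i, v i) * ∏ i, ((T i).card : ℝ) := by
  have e1 : ∑ f ∈ Fintype.piFinset T, (∑ i, h i (f i)) ^ 2 =
      ∑ i, ∑ j, ∑ f ∈ Fintype.piFinset T, h i (f i) * h j (f j) := by
    simp_rw [sq, sum_mul_sum]
    rw [sum_comm]
    apply sum_congr rfl; intro i _
    rw [sum_comm]
  have e2 : ∀ i j, i ≠ j → ∑ f ∈ Fintype.piFinset T, h i (f i) * h j (f j) = 0 := by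
    intro i j hij
    let w : ι → ℕ → ℝ := fun k r => (if k = i then h i r else 1) * (if k = j then h j r else 1)
    have hw : ∀ f ∈ Fintype.piFinset T, h i (f i) * h j (f j) = ∏ k, w k (f k) := by
      intro f _
      simp only [w]
      rw [prod_mul_distrib, Finset.prod_ite_eq' univ i (fun k => h i (f k)),
        Finset.prod_ite_eq' univ j (fun k => h j (f k))]
      simp
    rw [sum_congr rfl hw, ← Finset.prod_univ_sum]
    apply Finset.prod_eq_zero (mem_univ i)
    simp [w, hij, h0]
  have e3 : ∀ i, ∑ f ∈ Fintype.piFinset T, h i (f i) * h i (f i) ≤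
      v i * ∏ k, ((T k).card : ℝ) := by
    intro i
    let w : ι → ℕ → ℝ := fun k r => (if k = i then h i r ^ 2 else 1)
    have hw : ∀ f ∈ Fintype.piFinset T, h i (f i) * h i (f i) = ∏ k, w k (f k) := by
      intro f _
      simp only [w]
      rw [Finset.prod_ite_eq' univ i (fun k => h i (f k) ^ 2)]
      simp [sq]
    rw [sum_congr rfl hw, ← Finset.prod_univ_sum]
    rw [← Finset.mul_prod_erase univ _ (mem_univ i),
      ← Finset.mul_prod_erase univ (fun k => ((T k).card : ℝ)) (mem_univ i), ← mul_assoc]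
    have : ∏ x ∈ univ.erase i, ∑ j ∈ T x, w x j = ∏ x ∈ univ.erase i, ((T x).card : ℝ) := by
      apply prod_congr rfl
      intro k hk
      have : k ≠ i := (mem_erase.1 hk).1
      have hw1 : ∀ r, w k r = 1 := fun r => if_neg this
      simp only [hw1, sum_const, nsmul_eq_mul, mul_one]
    rw [this]
    apply mul_le_mul_of_nonneg_right
    · have hw1 : ∀ r, w i r = h i r ^ 2 := fun r => if_pos rfl
      simp only [hw1]
      exact hv i
    · exact prod_nonneg fun _ _ => Nat.cast_nonneg _
  rw [e1, sum_mul]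
  apply sum_le_sum
  intro i _
  rw [Finset.sum_eq_single i (fun j _ hj => e2 i j hj.symm) (by simp)]
  exact e3 i

/-- number of square roots of unity mod `q` -/
def cq (q : ℕ) : ℝ := if q = 2 then 1 else 2

lemma card_roots (q : ℕ) (hq : q.Prime) :
    (((Finset.Ico 1 q).filter (fun r => q ∣ r ^ 2 - 1)).card : ℝ) = cq q := by
  unfold cq
  split_ifs with h
  · subst h
    have : ((Finset.Ico 1 2).filter (fun r => 2 ∣ r ^ 2 - 1)) = {1} := by decide
    rw [this]; simp
  · have : ((Finset.Ico 1 q).filter (fun r => q ∣ r ^ 2 - 1)) = {1, q - 1} := by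
      have h2 := hq.two_le
      ext r
      simp only [mem_filter, Finset.mem_Ico, mem_insert, mem_singleton]
      have key : 1 ≤ r → r ^ 2 - 1 = (r + 1) * (r - 1) := by
        intro _
        have := Nat.sq_sub_sq r 1
        simpa using this
      constructor
      · rintro ⟨⟨h1, h3⟩, h4⟩
        rw [key h1] at h4
        rcases hq.dvd_mul.1 h4 with h5 | h5
        · have := Nat.le_of_dvd (by omega) h5
          right; omega
        · left
          by_contra h6
          have := Nat.le_of_dvd (by omega) h5
          omega
      · rintro (rfl | rfl)
        · simp; omega
        · refine ⟨by omega, ?_⟩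
          rw [key (by omega)]
          have : q - 1 + 1 = q := by omega
          rw [this]
          exact Dvd.intro _ rfl
    rw [this, card_pair]
    · norm_num
    · have := hq.two_le
      omega

lemma dvd_sq_mod (p q : ℕ) (hp : 1 ≤ p) (hpq : 1 ≤ p % q) :
    q ∣ p ^ 2 - 1 ↔ q ∣ (p % q) ^ 2 - 1 := by
  have h1 : 1 ≤ p ^ 2 := Nat.one_le_pow _ _ hp
  have h2 : 1 ≤ (p % q) ^ 2 := Nat.one_le_pow _ _ hpq
  rw [← Nat.modEq_iff_dvd' h1, ← Nat.modEq_iff_dvd' h2]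
  have h3 : (p % q) ^ 2 ≡ p ^ 2 [MOD q] := (Nat.mod_modEq p q).pow 2
  exact ⟨fun h => h.trans h3.symm, fun h => h.trans h3⟩

set_option maxHeartbeats 800000 in
theorem bad_bound (P : Finset ℕ) (hP : ∀ q ∈ P, q.Prime) (N R : ℕ) (hR : 2 ≤ R)
    (hPR : ∀ q ∈ P, q ≤ R) (t : ℝ) (ht : 0 < t) :
    (((Finset.Ioc 0 N).filter (fun p => p.Prime ∧
      t ≤ |((P.filter (fun q => q ∣ p ^ 2 - 1)).card : ℝ) -
        ∑ q ∈ P, cq q * ((q : ℝ) - 1)⁻¹|)).card : ℝ) ≤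
      R + (∑ q ∈ P, cq q * ((q : ℝ) - 1)⁻¹) / t ^ 2 *
        (2 * N / Real.log R + (∏ q ∈ P, ((q : ℝ) - 1)) * (R : ℝ) ^ 4) := by
  classical
  set μ := ∑ q ∈ P, cq q * ((q : ℝ) - 1)⁻¹ with hμ
  set Φ := ∏ q ∈ P, ((q : ℝ) - 1) with hΦ
  have hq1 : ∀ q ∈ P, (0:ℝ) < (q:ℝ) - 1 := by
    intro q hq
    have : (1:ℝ) < q := by exact_mod_cast (hP q hq).one_lt
    linarith
  have hΦ0 : 0 < Φ := prod_pos hq1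
  have hcq : ∀ q, 0 < cq q := by intro q; unfold cq; split_ifs <;> norm_num
  have hμ0 : 0 ≤ μ := sum_nonneg fun q hq => mul_nonneg (hcq q).le (inv_nonneg.2 (hq1 q hq).le)
  let T : {x // x ∈ P} → Finset ℕ := fun q => Finset.Ico 1 q.1
  let I : {x // x ∈ P} → ℕ → ℝ := fun q r => if q.1 ∣ r ^ 2 - 1 then 1 else 0
  let v : {x // x ∈ P} → ℝ := fun q => cq q.1 * ((q.1 : ℝ) - 1)⁻¹
  have hTc : ∀ q, ((T q).card : ℝ) = (q.1 : ℝ) - 1 := by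
    intro q
    simp only [T, Nat.card_Ico]
    rw [Nat.cast_sub (hP q.1 q.2).one_le]; simp
  have hIs : ∀ q, ∑ r ∈ T q, I q r = cq q.1 := by
    intro q
    simp only [I, T]
    rw [← sum_filter, sum_const, nsmul_eq_mul, mul_one]
    exact card_roots q.1 (hP q.1 q.2)
  have hvT : ∀ q, v q * ((T q).card : ℝ) = cq q.1 := by
    intro q
    rw [hTc]
    have := hq1 q.1 q.2
    simp only [v]
    field_simp
  have hsm := second_moment T (fun q r => I q r - v q) v
    (by
      intro q
      rw [sum_sub_distrib, hIs, sum_const, nsmul_eq_mul, mul_comm, hvT]; ring)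
    (by
      intro q
      have : ∀ r ∈ T q, (I q r - v q) ^ 2 = I q r - 2 * v q * I q r + v q ^ 2 := by
        intro r _
        have : I q r ^ 2 = I q r := by simp only [I]; split_ifs <;> norm_num
        rw [sub_sq, this]; ring
      rw [sum_congr rfl this, sum_add_distrib, sum_sub_distrib, ← mul_sum, hIs, sum_const,
        nsmul_eq_mul]
      have h1 := hvT q
      have hv0 : 0 ≤ v q := mul_nonneg (hcq _).le (inv_nonneg.2 (hq1 q.1 q.2).le)
      have h2 := hcq q.1
      nlinarith [mul_nonneg hv0 h2.le])
  have hvs : ∑ q, v q = μ := by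
    rw [hμ]; exact Finset.sum_coe_sort P (fun q => cq q * ((q : ℝ) - 1)⁻¹)
  have hTp : ∏ q, ((T q).card : ℝ) = Φ := by
    rw [hΦ]
    simp_rw [hTc]
    exact Finset.prod_coe_sort P (fun q => ((q : ℝ) - 1))
  rw [hvs, hTp] at hsm
  -- bad vectors
  set B := (Fintype.piFinset T).filter (fun f => t ≤ |∑ q, I q (f q) - μ|) with hB
  have hBc : (B.card : ℝ) ≤ μ / t ^ 2 * Φ := by
    have : (B.card : ℝ) * t ^ 2 ≤ μ * Φ := by
      refine le_trans (cheb (Fintype.piFinset T) (fun f => ∑ q, (I q (f q) - v q)) _ t ht ?_) hsm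
      intro f _ hf
      rw [sum_sub_distrib, hvs]
      exact hf
    rw [div_mul_eq_mul_div, le_div_iff₀ (pow_pos ht 2)]
    exact this
  -- fibres
  set D := ∏ q ∈ P, q with hD
  have hD0 : 0 < D := prod_pos fun q hq => (hP q hq).pos
  have hS := sS_pos (D := D) (R := R) (by omega)
  have hlog : 0 < Real.log R := Real.log_pos (by exact_mod_cast hR)
  have hfib : ∀ f : {x // x ∈ P} → ℕ, (((Finset.Ioc 0 N).filter
      (fun p => R < p ∧ p.Prime ∧ ∀ q : {x // x ∈ P}, p % q.1 = f q)).card : ℝ) ≤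
      2 * N / (Φ * Real.log R) + (R : ℝ) ^ 4 := by
    intro f
    have hmain : (N : ℝ) / D * (sS D R)⁻¹ ≤ 2 * N / (Φ * Real.log R) := by
      have h1 := log_le_prod_mul_sS P hP R
      have h2 : ∏ p ∈ P, (1 + ((p : ℝ) - 1)⁻¹) = D / Φ := by
        rw [hD, hΦ]
        push_cast
        rw [← prod_div_distrib]
        apply prod_congr rfl
        intro q hq
        have := hq1 q hq
        field_simp
        ring
      rw [h2] at h1
      have hD0' : (0:ℝ) < D := by exact_mod_cast hD0
      have h3 : Φ * Real.log R ≤ 2 * (D * sS D R) := by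
        rw [div_mul_eq_mul_div, div_le_div_iff₀ (by norm_num) hΦ0] at h1
        linarith
      rw [← div_eq_mul_inv, div_div, div_le_div_iff₀ (by positivity) (by positivity)]
      have : (0:ℝ) ≤ N := Nat.cast_nonneg N
      nlinarith
    rcases Finset.eq_empty_or_nonempty ((Finset.Ioc 0 N).filter
      (fun p => R < p ∧ p.Prime ∧ ∀ q : {x // x ∈ P}, p % q.1 = f q)) with he | ⟨p0, hp0⟩
    · rw [he]; simp; positivity
    · have hp0' := (mem_filter.1 hp0).2.2.2
      refine le_trans ?_ ((sieve_bound D R N p0 hD0 (by omega)).trans (add_le_add hmain le_rfl))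
      norm_cast
      apply card_le_card
      intro p hp
      rw [mem_filter] at hp ⊢
      refine ⟨hp.1, hp.2.1, hp.2.2.1, ?_⟩
      rw [Nat.modEq_iff_dvd, hD]
      push_cast
      apply Finset.prod_dvd_of_coprime
      · intro a ha b hb hab
        exact Nat.isCoprime_iff_coprime.2 ((Nat.coprime_primes (hP a ha) (hP b hb)).2 hab)
      · intro q hq
        rw [← Nat.modEq_iff_dvd]
        exact (hp.2.2.2 ⟨q, hq⟩).trans (hp0' ⟨q, hq⟩).symm
  -- covering
  have hcover : (Finset.Ioc 0 N).filter (fun p => p.Prime ∧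
      t ≤ |((P.filter (fun q => q ∣ p ^ 2 - 1)).card : ℝ) - μ|) ⊆
      Finset.Ioc 0 R ∪ B.biUnion (fun f => (Finset.Ioc 0 N).filter
      (fun p => R < p ∧ p.Prime ∧ ∀ q : {x // x ∈ P}, p % q.1 = f q)) := by
    intro p hp
    rw [mem_filter] at hp
    obtain ⟨hpN, hpp, hpt⟩ := hp
    rw [mem_union]
    by_cases hpR : p ≤ R
    · left; rw [Finset.mem_Ioc]; exact ⟨hpp.pos, hpR⟩
    · right
      have hmod : ∀ q ∈ P, 1 ≤ p % q := by
        intro q hq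
        by_contra h
        have : q ∣ p := Nat.dvd_of_mod_eq_zero (by omega)
        have := (Nat.prime_dvd_prime_iff_eq (hP q hq) hpp).1 this
        have := hPR q hq
        omega
      refine mem_biUnion.2 ⟨fun q => p % q.1, ?_, ?_⟩
      · rw [hB, mem_filter, Fintype.mem_piFinset]
        refine ⟨fun q => ?_, ?_⟩
        · simp only [T, Finset.mem_Ico]
          exact ⟨hmod q.1 q.2, Nat.mod_lt _ (hP q.1 q.2).pos⟩
        · have : ∑ q : {x // x ∈ P}, I q (p % q.1) = ((P.filter (fun q => q ∣ p ^ 2 - 1)).card : ℝ) := by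
            simp only [I]
            rw [Finset.sum_coe_sort P (fun q => if q ∣ (p % q) ^ 2 - 1 then (1:ℝ) else 0),
              ← sum_filter, sum_const, nsmul_eq_mul, mul_one]
            congr 2
            apply filter_congr
            intro q hq
            exact (dvd_sq_mod p q hpp.one_le (hmod q hq)).symm
          rw [this]; exact hpt
      · rw [mem_filter]
        exact ⟨hpN, by omega, hpp, fun _ => rfl⟩
  have hc1 := card_le_card hcover
  have hc2 := hc1.trans (card_union_le _ _)
  have hc3 := hc2.trans (add_le_add le_rfl card_biUnion_le)
  have hc4 : (((Finset.Ioc 0 N).filter (fun p => p.Prime ∧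
      t ≤ |((P.filter (fun q => q ∣ p ^ 2 - 1)).card : ℝ) - μ|)).card : ℝ) ≤
      R + ∑ f ∈ B, (((Finset.Ioc 0 N).filter
      (fun p => R < p ∧ p.Prime ∧ ∀ q : {x // x ∈ P}, p % q.1 = f q)).card : ℝ) := by
    have : (Finset.Ioc 0 R).card = R := by simp
    rw [this] at hc3
    exact_mod_cast hc3
  refine hc4.trans (add_le_add le_rfl ?_)
  refine (sum_le_sum (fun f _ => hfib f)).trans ?_
  rw [sum_const, nsmul_eq_mul]
  refine (mul_le_mul_of_nonneg_right hBc (by positivity)).trans ?_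
  apply le_of_eq
  field_simp

lemma mean_bounds : ∃ C : ℝ, ∀ y : ℝ, 4 ≤ y →
    |(∑ q ∈ (⌊y⌋₊).primesLE, cq q * ((q : ℝ) - 1)⁻¹) - 2 * Real.log (Real.log y)| ≤ C := by
  obtain ⟨C, hC⟩ := mertens_upper
  refine ⟨max (2 * C) 5, fun y hy => ?_⟩
  have hy0 : 0 < y := by linarith
  have hY4 : 4 ≤ ⌊y⌋₊ := Nat.le_floor (by exact_mod_cast hy)
  set Y := ⌊y⌋₊ with hYdef
  have h1 := mertens_lower Y (by omega)
  have h2 := hC Y (by omega)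
  set M := ∑ p ∈ Y.primesLE, ((p : ℝ) - 1)⁻¹ with hM
  have hmem : 2 ∈ Y.primesLE := by rw [Nat.mem_primesLE]; exact ⟨by omega, Nat.prime_two⟩
  have hμ : ∑ q ∈ Y.primesLE, cq q * ((q : ℝ) - 1)⁻¹ = 2 * M - 1 := by
    rw [hM, ← Finset.add_sum_erase _ _ hmem, ← Finset.add_sum_erase _ _ hmem, mul_add, mul_sum]
    have : ∑ x ∈ Y.primesLE.erase 2, cq x * ((x : ℝ) - 1)⁻¹ =
        ∑ x ∈ Y.primesLE.erase 2, 2 * ((x : ℝ) - 1)⁻¹ := by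
      apply sum_congr rfl
      intro q hq
      have : q ≠ 2 := (mem_erase.1 hq).1
      simp [cq, this]
    rw [this]
    simp only [cq, if_true]
    norm_num
    ring
  rw [hμ]
  have hYy : (Y : ℝ) ≤ y := Nat.floor_le hy0.le
  have hYy' : y < Y + 1 := Nat.lt_floor_add_one y
  have hY4' : (4:ℝ) ≤ Y := by exact_mod_cast hY4
  have l0 : 0 < Real.log Y := Real.log_pos (by linarith)
  have l0y : 0 < Real.log y := Real.log_pos (by linarith)
  have l1 : Real.log (Real.log Y) ≤ Real.log (Real.log y) :=
    Real.log_le_log l0 (Real.log_le_log (by linarith) hYy)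
  have l2 : Real.log y ≤ 2 * Real.log Y := by
    have : Real.log y ≤ Real.log ((Y:ℝ) ^ 2) := Real.log_le_log hy0 (by nlinarith)
    rw [Real.log_pow] at this
    exact_mod_cast this
  have l3 : Real.log (Real.log y) - Real.log 4 ≤ Real.log (Real.log Y / 2) := by
    rw [← Real.log_div l0y.ne' (by norm_num)]
    apply Real.log_le_log (by positivity)
    linarith
  have l4 : Real.log 4 < 2 := by
    have : Real.log 4 = 2 * Real.log 2 := by
      rw [show (4:ℝ) = 2 ^ 2 by norm_num, Real.log_pow]; norm_num
    rw [this]; linarith [Real.log_two_lt_d9]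
  rw [abs_le]
  constructor
  · have := le_max_right (2 * C) 5
    linarith
  · have := le_max_left (2 * C) 5
    linarith

lemma omegay_eq (y : ℝ) (p : ℕ) (hp : p.Prime) (hy : 0 ≤ y) :
    omegay y (p ^ 2 - 1) = ((⌊y⌋₊).primesLE.filter (fun q => q ∣ p ^ 2 - 1)).card := by
  unfold omegay
  congr 1
  ext q
  have h1 : p ^ 2 - 1 ≠ 0 := by
    have := hp.two_le
    have : 4 ≤ p ^ 2 := by nlinarith
    omega
  rw [mem_filter, mem_filter, Nat.mem_primeFactors, Nat.mem_primesLE, Nat.le_floor_iff hy]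
  tauto

lemma main_count : ∃ C : ℝ, ∀ x : ℝ, 1 < x →
    4 ≤ Real.log (Real.log x) → 1 ≤ Real.log (Real.log (Real.log (Real.log x))) →
    C ≤ Real.log (Real.log (Real.log (Real.log x))) →
    2 ≤ x ^ (1 / 20 : ℝ) →
    Real.log x ^ 3 ≤ x ^ (1 / 20 : ℝ) →
    ({p : ℕ | p.Prime ∧ (p : ℝ) ≤ x ∧
          (omegay (Real.log (Real.log x)) (p ^ 2 - 1) : ℝ) ∉
            Set.Icc (1.5 * Real.log (Real.log (Real.log (Real.log x))))
              (2.5 * Real.log (Real.log (Real.log (Real.log x))))}.ncard : ℝ) ≤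
      1969 * (x / Real.log x) / Real.log (Real.log (Real.log (Real.log x))) := by
  obtain ⟨C, hC⟩ := mean_bounds
  refine ⟨4 * C, fun x hx hy4 hL1 hLC hx2 hx3 => ?_⟩
  have hmb := hC _ hy4
  set y := Real.log (Real.log x) with hy
  set L := Real.log (Real.log y) with hL
  set P := (⌊y⌋₊).primesLE with hPdef
  set μ := ∑ q ∈ P, cq q * ((q : ℝ) - 1)⁻¹ with hμ
  set N := ⌊x⌋₊ with hN
  set z := x ^ (1 / 20 : ℝ) with hz
  have hx0 : 0 < x := by linarith
  have hz0 : 0 < z := by positivity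
  have hlx : 0 < Real.log x := Real.log_pos hx
  have hzx : z ^ 20 = x := by
    rw [hz, ← Real.rpow_natCast, ← Real.rpow_mul hx0.le]; norm_num
  set R := ⌊z ^ 2⌋₊ with hR
  have hRz : (R : ℝ) ≤ z ^ 2 := Nat.floor_le (by positivity)
  have hzR : z ≤ R := by
    have := Nat.lt_floor_add_one (z ^ 2)
    rw [← hR] at this
    nlinarith
  have hR2 : 2 ≤ R := by
    have : (2:ℝ) ≤ R := hx2.trans hzR
    exact_mod_cast this
  have hL0 : 0 < L := by linarith
  have hylx : y ≤ Real.log x := Real.log_le_self hlx.le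
  have hlx1 : 1 ≤ Real.log x := by linarith
  have hlx3 : Real.log x ≤ Real.log x ^ 3 := by
    nlinarith [mul_le_mul hlx1 hlx1 zero_le_one hlx.le]
  have hPR : ∀ q ∈ P, q ≤ R := by
    intro q hq
    rw [hPdef, Nat.mem_primesLE, Nat.le_floor_iff (by linarith)] at hq
    have : (q : ℝ) ≤ R := by linarith [hq.1]
    exact_mod_cast this
  have hPp : ∀ q ∈ P, q.Prime := fun q hq => Nat.prime_of_mem_primesLE hq
  have hbb := bad_bound P hPp N R hR2 hPR (L / 4) (by positivity)
  rw [← hμ] at hbb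
  rw [abs_le] at hmb
  have hsub : ({p : ℕ | p.Prime ∧ (p : ℝ) ≤ x ∧
          (omegay y (p ^ 2 - 1) : ℝ) ∉ Set.Icc (1.5 * L) (2.5 * L)}.ncard : ℝ) ≤
      (((Finset.Ioc 0 N).filter (fun p => p.Prime ∧
      L / 4 ≤ |((P.filter (fun q => q ∣ p ^ 2 - 1)).card : ℝ) - μ|)).card : ℝ) := by
    rw [Nat.cast_le, ← Set.ncard_coe_finset]
    apply Set.ncard_le_ncard _ (Finset.finite_toSet _)
    rintro p ⟨hp, hpx, hpo⟩
    rw [Finset.mem_coe, mem_filter, Finset.mem_Ioc, hN, Nat.le_floor_iff hx0.le]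
    refine ⟨⟨hp.pos, hpx⟩, hp, ?_⟩
    rw [omegay_eq y p hp (by linarith), ← hPdef] at hpo
    by_contra hcon
    rw [not_le, abs_lt] at hcon
    apply hpo
    constructor <;> norm_num <;> linarith
  refine hsub.trans (hbb.trans ?_)
  have hμ3 : μ ≤ 3 * L := by linarith
  have hμ0 : 0 ≤ μ := by linarith
  have e1 : μ / (L / 4) ^ 2 ≤ 48 / L := by
    rw [div_le_div_iff₀ (by positivity) hL0]
    nlinarith
  have hNx : (N : ℝ) ≤ x := Nat.floor_le hx0.le
  have e2 : Real.log x / 20 ≤ Real.log R := by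
    have : Real.log z ≤ Real.log R := Real.log_le_log hz0 hzR
    rw [hz, Real.log_rpow hx0] at this
    linarith
  have e3 : 2 * N / Real.log R ≤ 40 * (x / Real.log x) := by
    have : 2 * N / Real.log R ≤ 2 * x / (Real.log x / 20) := by gcongr
    refine this.trans (le_of_eq ?_)
    field_simp
    norm_num
  have hPhi : ∏ q ∈ P, ((q : ℝ) - 1) ≤ Real.log x ^ 2 := by
    have a1 : ∏ q ∈ P, ((q : ℝ) - 1) ≤ ∏ q ∈ P, (q : ℝ) := by
      apply Finset.prod_le_prod
      · intro q hq
        have : (1:ℝ) ≤ q := by exact_mod_cast (hPp q hq).one_le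
        linarith
      · intro q _; linarith
    have a2 : ∏ q ∈ P, (q : ℝ) = Real.exp (Chebyshev.theta y) := by
      rw [Chebyshev.theta_eq_sum_primesLE, Real.exp_sum]
      apply prod_congr rfl
      intro q hq
      rw [Real.exp_log (by exact_mod_cast (hPp q hq).pos)]
    have a3 := Chebyshev.theta_le_log4_mul_x (x := y) (by linarith)
    have l4 : Real.log 4 < 2 := by
      have : Real.log 4 = 2 * Real.log 2 := by
        rw [show (4:ℝ) = 2 ^ 2 by norm_num, Real.log_pow]; norm_num
      rw [this]; linarith [Real.log_two_lt_d9]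
    have a4 : Real.log x ^ 2 = Real.exp (2 * y) := by
      rw [hy, two_mul, Real.exp_add, Real.exp_log hlx]; ring
    rw [a4]
    rw [a2] at a1
    refine a1.trans (Real.exp_le_exp.2 ?_)
    nlinarith
  have hz1 : 1 ≤ z := by linarith
  have e4 : (∏ q ∈ P, ((q : ℝ) - 1)) * (R : ℝ) ^ 4 ≤ x / Real.log x := by
    rw [le_div_iff₀ hlx]
    calc (∏ q ∈ P, ((q : ℝ) - 1)) * (R : ℝ) ^ 4 * Real.log x
        ≤ Real.log x ^ 2 * (z ^ 2) ^ 4 * Real.log x := by gcongr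
      _ = Real.log x ^ 3 * z ^ 8 := by ring
      _ ≤ z * z ^ 8 := by gcongr
      _ = z ^ 9 := by ring
      _ ≤ z ^ 20 := pow_le_pow_right₀ hz1 (by norm_num)
      _ = x := hzx
  have hLx : L ≤ Real.log x := by
    have b1 : 0 < Real.log y := Real.log_pos (by linarith)
    have b2 : L ≤ Real.log y := Real.log_le_self b1.le
    have b3 : Real.log y ≤ y := Real.log_le_self (by linarith)
    linarith
  have e5 : (R : ℝ) ≤ (x / Real.log x) / L := by
    rw [le_div_iff₀ hL0, le_div_iff₀ hlx]
    calc (R : ℝ) * L * Real.log x ≤ z ^ 2 * Real.log x * Real.log x := by gcongr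
      _ ≤ z ^ 2 * Real.log x * Real.log x * Real.log x := by
          apply le_mul_of_one_le_right (by positivity) hlx1
      _ = z ^ 2 * Real.log x ^ 3 := by ring
      _ ≤ z ^ 2 * z := by gcongr
      _ = z ^ 3 := by ring
      _ ≤ z ^ 20 := pow_le_pow_right₀ hz1 (by norm_num)
      _ = x := hzx
  have e6 : 0 ≤ 2 * N / Real.log R + (∏ q ∈ P, ((q : ℝ) - 1)) * (R : ℝ) ^ 4 := by
    have : 0 ≤ Real.log R := by linarith
    have h' : 0 ≤ ∏ q ∈ P, ((q : ℝ) - 1) := by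
      apply prod_nonneg
      intro q hq
      have : (1:ℝ) ≤ q := by exact_mod_cast (hPp q hq).one_le
      linarith
    positivity
  calc _ ≤ (x / Real.log x) / L + 48 / L * (40 * (x / Real.log x) + x / Real.log x) := by
        apply add_le_add e5
        exact mul_le_mul e1 (add_le_add e3 e4) e6 (by positivity)
    _ = _ := by ring

lemma pi_lower : ∀ᶠ x : ℝ in atTop, x / Real.log x ≤ 4 * (Nat.primeCounting ⌊x⌋₊ : ℝ) := by
  have h1 : ∀ᶠ x : ℝ in atTop, Real.log x ≤ (1 / 8) * x := by
    have := Real.isLittleO_log_id_atTop.bound (c := 1 / 8) (by norm_num)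
    filter_upwards [this, eventually_ge_atTop 1] with x hx hx1
    rw [Real.norm_of_nonneg (Real.log_nonneg hx1), id, Real.norm_of_nonneg (by linarith)] at hx
    exact hx
  filter_upwards [h1, eventually_ge_atTop 100] with x hx hx1
  have hl : 0 < Real.log x := Real.log_pos (by linarith)
  have h2 := (Chebyshev.psi_ge' (x := x) (by linarith)).trans
    (Chebyshev.psi_le_primeCounting_mul_log' x)
  have h3 : Real.log (x + 2) ≤ Real.log x + 1 := by
    have : Real.log (x + 2) ≤ Real.log (x * 2) := Real.log_le_log (by linarith) (by linarith)
    rw [Real.log_mul (by linarith) (by norm_num)] at this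
    linarith [Real.log_two_lt_d9]
  rw [div_le_iff₀ hl]
  have := Real.log_two_gt_d9
  nlinarith

lemma main_part : ∃ C : ℝ, 0 < C ∧ ∀ᶠ x : ℝ in atTop,
      ({p : ℕ | p.Prime ∧ (p : ℝ) ≤ x ∧
          (omegay (Real.log (Real.log x)) (p ^ 2 - 1) : ℝ) ∉
            Set.Icc (1.5 * Real.log (Real.log (Real.log (Real.log x))))
              (2.5 * Real.log (Real.log (Real.log (Real.log x))))}.ncard : ℝ) ≤
        C * (Nat.primeCounting ⌊x⌋₊ : ℝ) / Real.log (Real.log (Real.log (Real.log x))) := by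
  obtain ⟨C, hC⟩ := main_count
  refine ⟨7876, by norm_num, ?_⟩
  have t2 : Tendsto (fun x : ℝ => Real.log (Real.log x)) atTop atTop :=
    Real.tendsto_log_atTop.comp Real.tendsto_log_atTop
  have t4 : Tendsto (fun x : ℝ => Real.log (Real.log (Real.log (Real.log x)))) atTop atTop :=
    t2.comp t2
  have t5 : Tendsto (fun x : ℝ => x ^ (1 / 20 : ℝ)) atTop atTop :=
    tendsto_rpow_atTop (by norm_num)
  have h6 : ∀ᶠ x : ℝ in atTop, Real.log x ^ 3 ≤ x ^ (1 / 20 : ℝ) := by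
    have := (isLittleO_log_rpow_rpow_atTop (s := 1 / 20) 3 (by norm_num)).bound
      (c := 1) (by norm_num)
    filter_upwards [this, eventually_ge_atTop 1] with x hx hx1
    have hl := Real.log_nonneg hx1
    rw [Real.norm_of_nonneg (by positivity), Real.norm_of_nonneg (by positivity), one_mul] at hx
    exact_mod_cast hx
  filter_upwards [eventually_gt_atTop 1, t2.eventually_ge_atTop 4, t4.eventually_ge_atTop 1,
    t4.eventually_ge_atTop C, t5.eventually_ge_atTop 2, h6, pi_lower] with x h1 h2 h3 h4 h5 h6 h7
  refine (hC x h1 h2 h3 h4 h5 h6).trans ?_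
  apply div_le_div_of_nonneg_right _ (by linarith)
  linarith

end Helpers

theorem type3_inconvenient_primes :
    (∃ C : ℝ, 0 < C ∧ ∀ᶠ x : ℝ in atTop,
      ({p : ℕ | p.Prime ∧ (p : ℝ) ≤ x ∧
          (omegay (Real.log (Real.log x)) (p ^ 2 - 1) : ℝ) ∉
            Set.Icc (1.5 * Real.log (Real.log (Real.log (Real.log x))))
              (2.5 * Real.log (Real.log (Real.log (Real.log x))))}.ncard : ℝ) ≤
        C * (Nat.primeCounting ⌊x⌋₊ : ℝ) / Real.log (Real.log (Real.log (Real.log x)))) ∧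
    Tendsto (fun x : ℝ =>
      ({p : ℕ | p.Prime ∧ (p : ℝ) ≤ x ∧
          (omegay (Real.log (Real.log x)) (p ^ 2 - 1) : ℝ) ∉
            Set.Icc (1.5 * Real.log (Real.log (Real.log (Real.log x))))
              (2.5 * Real.log (Real.log (Real.log (Real.log x))))}.ncard : ℝ) /
        (Nat.primeCounting ⌊x⌋₊ : ℝ)) atTop (𝓝 0) := by
  refine ⟨main_part, ?_⟩
  obtain ⟨C, hC0, hC⟩ := main_part
  have t2 : Tendsto (fun x : ℝ => Real.log (Real.log x)) atTop atTop :=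
    Real.tendsto_log_atTop.comp Real.tendsto_log_atTop
  have t4 : Tendsto (fun x : ℝ => Real.log (Real.log (Real.log (Real.log x)))) atTop atTop :=
    t2.comp t2
  have t6 : Tendsto (fun x : ℝ => C / Real.log (Real.log (Real.log (Real.log x)))) atTop (𝓝 0) :=
    t4.const_div_atTop C
  refine tendsto_of_tendsto_of_tendsto_of_le_of_le' tendsto_const_nhds t6
    (Eventually.of_forall fun x => by positivity) ?_
  filter_upwards [hC, pi_lower, eventually_gt_atTop 1] with x h1 h2 h3
  have hl := Real.log_pos h3
  have hpi : (0:ℝ) < (Nat.primeCounting ⌊x⌋₊ : ℝ) := by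
    have : 0 < x / Real.log x := by positivity
    linarith
  rw [div_le_iff₀ hpi]
  refine h1.trans (le_of_eq ?_)
  ring
end

section
/- Fix a positive integer ℓ. There exists a constant C > 0 (depending only on ℓ) such that for all sufficiently large real x, writing y = log log x, one has Σ_{p ≤ x, p prime, p > ℓ} (ω_y(p−ℓ) − log log y)² ≤ C · π(x) · log log y, and likewise Σ_{p ≤ x, p prime} (ω_y(p+ℓ) − log log y)² ≤ C · π(x) · log log y. -/
open Filter Topology

/-- Mean over one period. -/
noncomputable def tkMean (M : ℕ) (f : ℕ → ℝ) : ℝ := (∑ n ∈ Finset.range M, f n) / M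

lemma tk_sum_split {f : ℕ → ℝ} {M : ℕ} (hf : Function.Periodic f M) (k r : ℕ) :
    ∑ n ∈ Finset.range (M * k + r), f n =
      k * ∑ n ∈ Finset.range M, f n + ∑ n ∈ Finset.range r, f n := by
  have hper : ∀ j i, f (M * j + i) = f i := by
    intro j i
    have := hf.nat_mul j i
    rw [← this]; congr 1; push_cast; ring
  have h1 : ∀ k : ℕ, ∑ n ∈ Finset.range (M * k), f n = k * ∑ n ∈ Finset.range M, f n := by
    intro k
    induction k with
    | zero => simp
    | succ k ih =>
      rw [Nat.mul_succ, Finset.sum_range_add, ih]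
      simp only [hper]
      push_cast; ring
  rw [Finset.sum_range_add, h1]
  simp only [hper]

lemma tk_abs_mean_le {f : ℕ → ℝ} {M : ℕ} (hM : 0 < M) {B : ℝ} (hB : ∀ n, |f n| ≤ B) :
    |tkMean M f| ≤ B := by
  unfold tkMean
  rw [abs_div, Nat.abs_cast, div_le_iff₀ (by exact_mod_cast hM)]
  calc |∑ n ∈ Finset.range M, f n| ≤ ∑ n ∈ Finset.range M, |f n| := Finset.abs_sum_le_sum_abs _ _
    _ ≤ ∑ n ∈ Finset.range M, B := Finset.sum_le_sum (fun i _ => hB i)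
    _ = B * M := by simp; ring

lemma tk_sum_le_mean {f : ℕ → ℝ} {M : ℕ} (hM : 0 < M) (hf : Function.Periodic f M)
    {B : ℝ} (hB : ∀ n, |f n| ≤ B) (N : ℕ) :
    ∑ n ∈ Finset.range N, f n ≤ N * tkMean M f + 2 * M * B := by
  have hB0 : 0 ≤ B := (abs_nonneg _).trans (hB 0)
  have hMr : (0:ℝ) < M := by exact_mod_cast hM
  have hsum : ∑ n ∈ Finset.range M, f n = M * tkMean M f := by
    unfold tkMean; field_simp
  have hmean := tk_abs_mean_le hM hB
  conv_lhs => rw [← Nat.div_add_mod N M]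
  rw [tk_sum_split hf, hsum]
  have hr : (N % M : ℕ) ≤ M := (Nat.mod_lt _ hM).le
  have hrr : ((N % M : ℕ) : ℝ) ≤ M := by exact_mod_cast hr
  have h2 : ∑ n ∈ Finset.range (N % M), f n ≤ M * B := by
    calc _ ≤ ∑ n ∈ Finset.range (N % M), B :=
          Finset.sum_le_sum (fun i _ => (le_abs_self _).trans (hB i))
      _ = (N % M : ℕ) * B := by simp
      _ ≤ _ := by gcongr
  have h3 : (N : ℝ) = M * (N / M : ℕ) + (N % M : ℕ) := by
    exact_mod_cast (Nat.div_add_mod N M).symm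
  have h4 : -((M:ℝ) * B) ≤ (N % M : ℕ) * tkMean M f := by
    have : |((N % M : ℕ) : ℝ) * tkMean M f| ≤ M * B := by
      rw [abs_mul, Nat.abs_cast]; gcongr
    exact (abs_le.mp this).1
  have h5 : (N:ℝ) * tkMean M f = (N / M : ℕ) * (M * tkMean M f) + (N % M : ℕ) * tkMean M f := by
    rw [h3]; ring
  linarith

lemma tk_periodic_mod {f : ℕ → ℝ} {M : ℕ} (hf : Function.Periodic f M) (n : ℕ) :
    f (n % M) = f n := by
  simpa using hf.map_mod_nat n

lemma tk_mean_mul {f g : ℕ → ℝ} {a b : ℕ} (ha : 0 < a) (hb : 0 < b) (hab : a.Coprime b)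
    (hf : Function.Periodic f a) (hg : Function.Periodic g b) :
    tkMean (a * b) (fun n => f n * g n) = tkMean a f * tkMean b g := by
  unfold tkMean
  have key : ∑ n ∈ Finset.range (a * b), f n * g n =
      (∑ i ∈ Finset.range a, f i) * ∑ j ∈ Finset.range b, g j := by
    rw [Finset.sum_mul_sum, ← Finset.sum_product']
    refine Finset.sum_bij (fun n _ => (n % a, n % b)) ?_ ?_ ?_ ?_
    · intro n _
      simp [Nat.mod_lt _ ha, Nat.mod_lt _ hb]
    · intro n hn m hm h
      simp only [Prod.mk.injEq] at h
      have h' : n ≡ m [MOD a * b] := (Nat.modEq_and_modEq_iff_modEq_mul hab).1 ⟨h.1, h.2⟩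
      exact Nat.ModEq.eq_of_lt_of_lt h' (Finset.mem_range.1 hn) (Finset.mem_range.1 hm)
    · rintro ⟨i, j⟩ hij
      simp only [Finset.mem_product, Finset.mem_range] at hij
      refine ⟨Nat.chineseRemainder hab i j, ?_, ?_⟩
      · exact Finset.mem_range.2 (Nat.chineseRemainder_lt_mul hab i j ha.ne' hb.ne')
      · have := (Nat.chineseRemainder hab i j).2
        simp only [Prod.mk.injEq]
        exact ⟨by rw [this.1, Nat.mod_eq_of_lt hij.1], by rw [this.2, Nat.mod_eq_of_lt hij.2]⟩
    · intro n _
      rw [tk_periodic_mod hf, tk_periodic_mod hg]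
  rw [key]; push_cast; rw [mul_div_mul_comm]

lemma tk_periodic_prod (u : Finset ℕ) (k : ℕ → ℕ → ℝ)
    (hk : ∀ p ∈ u, Function.Periodic (k p) p) {M : ℕ} (hM : ∀ p ∈ u, p ∣ M) :
    Function.Periodic (fun n => ∏ p ∈ u, k p n) M := by
  intro n
  refine Finset.prod_congr rfl (fun p hp => ?_)
  obtain ⟨c, hc⟩ := hM p hp
  have := (hk p hp).nat_mul c n
  rw [← this, hc]; congr 1; push_cast; ring

lemma tk_mean_prod (u : Finset ℕ) (hu : ∀ p ∈ u, p.Prime) (k : ℕ → ℕ → ℝ)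
    (hk : ∀ p ∈ u, Function.Periodic (k p) p) :
    tkMean (∏ p ∈ u, p) (fun n => ∏ p ∈ u, k p n) = ∏ p ∈ u, tkMean p (k p) := by
  induction u using Finset.induction_on with
  | empty => simp [tkMean]
  | insert q s hq ih =>
    have hs : ∀ p ∈ s, p.Prime := fun p hp => hu p (Finset.mem_insert_of_mem hp)
    have hks : ∀ p ∈ s, Function.Periodic (k p) p := fun p hp => hk p (Finset.mem_insert_of_mem hp)
    have hqp := hu q (Finset.mem_insert_self _ _)
    simp only [Finset.prod_insert hq]
    rw [← ih hs hks]
    refine tk_mean_mul hqp.pos (Finset.prod_pos fun p hp => (hs p hp).pos) ?_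
      (hk q (Finset.mem_insert_self _ _)) (tk_periodic_prod s k hks fun p hp => Finset.dvd_prod_of_mem _ hp)
    refine Nat.Coprime.prod_right fun p hp => ?_
    exact (Nat.coprime_primes hqp (hs p hp)).2 (fun h => hq (h ▸ hp))

noncomputable def tkh (p n : ℕ) : ℝ := if p ∣ n then -1 else 1 / ((p : ℝ) - 1)
noncomputable def tke (p n : ℕ) : ℝ := if p ∣ n then 0 else 1
noncomputable def tkd (c : ℤ) (p n : ℕ) : ℝ := if (p : ℤ) ∣ (n : ℤ) - c then 1 else 0
noncomputable def tkrho (c : ℤ) (p : ℕ) : ℝ := if (p : ℤ) ∣ c then 0 else 1 / ((p : ℝ) - 1)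

lemma tk_mean_ite {p : ℕ} (hp : p.Prime) (a b : ℝ) :
    tkMean p (fun n => if p ∣ n then a else b) = (a + (p - 1) * b) / p := by
  unfold tkMean
  obtain ⟨k, rfl⟩ : ∃ k, p = k + 1 := ⟨p - 1, by have := hp.pos; omega⟩
  congr 1
  rw [Finset.sum_range_succ']
  have : ∀ i ∈ Finset.range k, (if k + 1 ∣ i + 1 then a else b) = b := by
    intro i hi
    rw [if_neg]
    intro h
    have := Nat.le_of_dvd (by omega) h
    have := Finset.mem_range.1 hi
    omega
  rw [Finset.sum_congr rfl this]
  simp; ring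

lemma tk_per_dvd (p : ℕ) (a b : ℝ) : Function.Periodic (fun n => if p ∣ n then a else b) p := by
  intro n
  simp

lemma tk_per_h (p : ℕ) : Function.Periodic (tkh p) p := tk_per_dvd p _ _
lemma tk_per_e (p : ℕ) : Function.Periodic (tke p) p := tk_per_dvd p _ _
lemma tk_per_d (c : ℤ) (p : ℕ) : Function.Periodic (tkd c p) p := by
  intro n
  unfold tkd
  have : (p : ℤ) ∣ ((n + p : ℕ) : ℤ) - c ↔ (p : ℤ) ∣ (n : ℤ) - c := by
    have h : ((n + p : ℕ) : ℤ) - c = ((n : ℤ) - c) + p := by push_cast; ring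
    rw [h]; exact dvd_add_self_right
  simp only [this]

lemma tk_prime_pos {p : ℕ} (hp : p.Prime) : (1:ℝ) ≤ (p:ℝ) - 1 := by
  have : (2:ℝ) ≤ p := by exact_mod_cast hp.two_le
  linarith

lemma tk_mean_h {p : ℕ} (hp : p.Prime) : tkMean p (tkh p) = 0 := by
  have := tk_mean_ite hp (-1) (1 / ((p:ℝ) - 1))
  have h1 := tk_prime_pos hp
  have h2 : (p:ℝ) - 1 ≠ 0 := by linarith
  have e : tkh p = fun n => if p ∣ n then (-1:ℝ) else 1 / ((p:ℝ) - 1) := rfl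
  rw [e, this]; field_simp; simp

lemma tk_mean_hh {p : ℕ} (hp : p.Prime) :
    tkMean p (fun n => tkh p n * tkh p n) = 1 / ((p:ℝ) - 1) := by
  have := tk_mean_ite hp 1 (1 / ((p:ℝ) - 1) * (1 / ((p:ℝ) - 1)))
  have h1 := tk_prime_pos hp
  have h2 : (p:ℝ) - 1 ≠ 0 := by linarith
  have h3 : (p:ℝ) ≠ 0 := by linarith
  have e : (fun n => tkh p n * tkh p n) =
      fun n => if p ∣ n then (1:ℝ) else 1 / ((p:ℝ) - 1) * (1 / ((p:ℝ) - 1)) := by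
    funext n; unfold tkh; split_ifs <;> simp
  rw [e, this]; field_simp; ring

lemma tk_mean_e {p : ℕ} (hp : p.Prime) : tkMean p (tke p) = 1 - 1 / (p:ℝ) := by
  have := tk_mean_ite hp 0 1
  have h1 := tk_prime_pos hp
  have h3 : (p:ℝ) ≠ 0 := by linarith
  have e : tke p = fun n => if p ∣ n then (0:ℝ) else 1 := rfl
  rw [e, this]; field_simp; ring

lemma tk_mean_ed (c : ℤ) {p : ℕ} (hp : p.Prime) :
    tkMean p (fun n => tke p n * tkd c p n) = (1 - 1 / (p:ℝ)) * tkrho c p := by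
  have h1 := tk_prime_pos hp
  have h2 : (p:ℝ) - 1 ≠ 0 := by linarith
  have h3 : (p:ℝ) ≠ 0 := by linarith
  have hdv : ∀ n : ℕ, (p:ℤ) ∣ (n:ℤ) ↔ p ∣ n := fun n => Int.natCast_dvd_natCast
  by_cases hc : (p:ℤ) ∣ c
  · have e : (fun n => tke p n * tkd c p n) = fun _ => 0 := by
      funext n; unfold tke tkd
      split_ifs with ha hb hb
      · simp
      · simp
      · exfalso; apply ha; rw [← hdv]; simpa using dvd_add hb hc
      · simp
    rw [e]; simp [tkMean, tkrho, hc]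
  · have e : (fun n => tke p n * tkd c p n) = tkd c p := by
      funext n; unfold tke tkd
      split_ifs with ha hb
      · exfalso; apply hc; rw [← hdv] at ha; simpa using dvd_sub ha hb
      · simp
      · simp
      · simp
    rw [e]
    unfold tkMean
    have hp0 : (0:ℤ) < p := by exact_mod_cast hp.pos
    have hs : ∑ n ∈ Finset.range p, tkd c p n = 1 := by
      have hnn := Int.emod_nonneg c hp0.ne'
      have hlt := Int.emod_lt_of_pos c hp0
      rw [Finset.sum_eq_single (c % p).toNat]
      · unfold tkd
        rw [if_pos]
        rw [Int.toNat_of_nonneg hnn]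
        have := Int.emod_add_mul_ediv c p
        exact ⟨-(c / p), by linarith⟩
      · intro n hn hne
        unfold tkd
        rw [if_neg]
        intro h
        apply hne
        have h' : (n:ℤ) % p = c % p := Int.emod_eq_emod_iff_emod_sub_eq_zero.2 (Int.emod_eq_zero_of_dvd h)
        rw [← h', Int.emod_eq_of_lt (by positivity) (by exact_mod_cast Finset.mem_range.1 hn)]
        simp
      · intro h
        exfalso; apply h
        rw [Finset.mem_range]; omega
    rw [hs]
    unfold tkrho
    rw [if_neg hc]; field_simp

lemma tk_rho_nonneg (c : ℤ) {p : ℕ} (hp : p.Prime) : 0 ≤ tkrho c p := by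
  have := tk_prime_pos hp
  unfold tkrho; split_ifs
  · exact le_rfl
  · positivity

lemma tk_mean_sum {ι : Type*} (s : Finset ι) (f : ι → ℕ → ℝ) (M : ℕ) :
    tkMean M (fun n => ∑ i ∈ s, f i n) = ∑ i ∈ s, tkMean M (f i) := by
  unfold tkMean
  rw [Finset.sum_comm, Finset.sum_div]

lemma tk_mean_add (f g : ℕ → ℝ) (M : ℕ) :
    tkMean M (fun n => f n + g n) = tkMean M f + tkMean M g := by
  unfold tkMean
  rw [Finset.sum_add_distrib, add_div]

lemma tk_mean_smul (a : ℝ) (f : ℕ → ℝ) (M : ℕ) :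
    tkMean M (fun n => a * f n) = a * tkMean M f := by
  unfold tkMean
  rw [← Finset.mul_sum, mul_div_assoc]

lemma tk_mean_eu (c : ℤ) (Q u : Finset ℕ) (hQ : ∀ p ∈ Q, p.Prime) (hu : u ⊆ Q) :
    tkMean (∏ p ∈ Q, p) (fun n => (∏ p ∈ Q, tke p n) * ∏ p ∈ u, tkd c p n) =
      (∏ p ∈ Q, (1 - 1 / (p:ℝ))) * ∏ p ∈ u, tkrho c p := by
  have h := tk_mean_prod Q hQ (fun p n => tke p n * (if p ∈ u then tkd c p n else 1)) (by
    intro p _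
    by_cases hp : p ∈ u
    · simp only [hp, if_true]
      exact (tk_per_e p).mul (tk_per_d c p)
    · simp only [hp, if_false, mul_one]
      exact tk_per_e p)
  simp only [Finset.prod_mul_distrib, Finset.prod_ite_mem, Finset.inter_eq_right.2 hu] at h
  rw [h]
  have h2 : ∀ p ∈ Q, tkMean p (fun n => tke p n * (if p ∈ u then tkd c p n else 1)) =
      (1 - 1 / (p:ℝ)) * (if p ∈ u then tkrho c p else 1) := by
    intro p hp
    by_cases hpu : p ∈ u
    · simp only [hpu, if_true]; exact tk_mean_ed c (hQ p hp)
    · simp only [hpu, if_false, mul_one]; exact tk_mean_e (hQ p hp)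
  rw [Finset.prod_congr rfl h2, Finset.prod_mul_distrib, Finset.prod_ite_mem,
    Finset.inter_eq_right.2 hu]

noncomputable def tkT (c : ℤ) (Q : Finset ℕ) (L : ℝ) (n : ℕ) : ℝ :=
  (∏ p ∈ Q, tke p n) * (∑ q ∈ Q, tkd c q n - L) ^ 2

lemma tk_mean_T (c : ℤ) (Q : Finset ℕ) (L : ℝ) (hQ : ∀ p ∈ Q, p.Prime) :
    tkMean (∏ p ∈ Q, p) (tkT c Q L) ≤
      (∏ p ∈ Q, (1 - 1 / (p:ℝ))) *
        (∑ q ∈ Q, tkrho c q + (∑ q ∈ Q, tkrho c q - L) ^ 2) := by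
  have hT : tkT c Q L = fun n =>
      (∑ q ∈ Q, ∑ r ∈ Q, (∏ p ∈ Q, tke p n) * ∏ p ∈ ({q, r} : Finset ℕ), tkd c p n) +
      ((-2 * L) * (∑ q ∈ Q, (∏ p ∈ Q, tke p n) * ∏ p ∈ ({q} : Finset ℕ), tkd c p n) +
      L ^ 2 * ((∏ p ∈ Q, tke p n) * ∏ p ∈ (∅ : Finset ℕ), tkd c p n)) := by
    funext n
    unfold tkT
    have hd : ∀ q r, ∏ p ∈ ({q, r} : Finset ℕ), tkd c p n = tkd c q n * tkd c r n := by
      intro q r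
      by_cases hqr : q = r
      · subst hqr
        simp only [Finset.pair_eq_singleton, Finset.prod_singleton]
        unfold tkd; split_ifs <;> simp
      · rw [Finset.prod_pair hqr]
    simp only [hd, Finset.prod_singleton, Finset.prod_empty, ← Finset.mul_sum]
    rw [← Finset.sum_mul]
    ring
  rw [hT, tk_mean_add, tk_mean_add, tk_mean_smul, tk_mean_smul, tk_mean_sum, tk_mean_sum]
  simp only [tk_mean_sum]
  rw [tk_mean_eu c Q ∅ hQ (by simp)]
  have e1 : ∑ q ∈ Q, tkMean (∏ p ∈ Q, p)
      (fun n => (∏ p ∈ Q, tke p n) * ∏ p ∈ ({q} : Finset ℕ), tkd c p n) =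
      (∏ p ∈ Q, (1 - 1 / (p:ℝ))) * ∑ q ∈ Q, tkrho c q := by
    rw [Finset.mul_sum]
    refine Finset.sum_congr rfl fun q hq => ?_
    rw [tk_mean_eu c Q {q} hQ (by simpa using hq)]; simp
  have hV : 0 ≤ ∏ p ∈ Q, (1 - 1 / (p:ℝ)) := by
    refine Finset.prod_nonneg fun p hp => ?_
    have := tk_prime_pos (hQ p hp)
    rw [sub_nonneg, div_le_one (by linarith)]; linarith
  have e2 : ∑ q ∈ Q, ∑ r ∈ Q, tkMean (∏ p ∈ Q, p)
      (fun n => (∏ p ∈ Q, tke p n) * ∏ p ∈ ({q, r} : Finset ℕ), tkd c p n) ≤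
      (∏ p ∈ Q, (1 - 1 / (p:ℝ))) * ((∑ q ∈ Q, tkrho c q) ^ 2 + ∑ q ∈ Q, tkrho c q) := by
    have hb : ∀ q ∈ Q, ∀ r ∈ Q, tkMean (∏ p ∈ Q, p)
      (fun n => (∏ p ∈ Q, tke p n) * ∏ p ∈ ({q, r} : Finset ℕ), tkd c p n) ≤
      (∏ p ∈ Q, (1 - 1 / (p:ℝ))) * (tkrho c q * tkrho c r + if q = r then tkrho c q else 0) := by
      intro q hq r hr
      rw [tk_mean_eu c Q {q, r} hQ (by intro a ha; simp at ha; rcases ha with rfl | rfl <;> assumption)]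
      refine mul_le_mul_of_nonneg_left ?_ hV
      by_cases hqr : q = r
      · subst hqr
        have := tk_rho_nonneg c (hQ q hq)
        simp; positivity
      · rw [Finset.prod_pair hqr, if_neg hqr, add_zero]
    refine (Finset.sum_le_sum fun q hq => Finset.sum_le_sum fun r hr => hb q hq r hr).trans ?_
    simp only [← Finset.mul_sum, Finset.sum_add_distrib]
    rw [← Finset.sum_mul]
    refine mul_le_mul_of_nonneg_left ?_ hV
    rw [sq]
    gcongr with q hq
    simp [hq]
  rw [e1]
  simp only [Finset.prod_empty, mul_one]
  nlinarith [e2]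

/-- Index sets for the sieve: sets of primes in `(Y, D]` with product at most `D`. -/
noncomputable def tkS (Y D : ℕ) : Finset (Finset ℕ) :=
  (((Finset.Ioc Y D).filter Nat.Prime).powerset).filter (fun s => ∏ p ∈ s, p ≤ D)

noncomputable def tkg (s : Finset ℕ) (n : ℕ) : ℝ := ∏ p ∈ s, tkh p n

noncomputable def tkH (Y D : ℕ) : ℝ := ∑ s ∈ tkS Y D, ∏ p ∈ s, (1 / ((p:ℝ) - 1))

lemma tk_mem_S {Y D : ℕ} {s : Finset ℕ} (hs : s ∈ tkS Y D) :
    (∀ p ∈ s, p.Prime ∧ Y < p ∧ p ≤ D) ∧ ∏ p ∈ s, p ≤ D := by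
  unfold tkS at hs
  rw [Finset.mem_filter, Finset.mem_powerset] at hs
  refine ⟨fun p hp => ?_, hs.2⟩
  have := hs.1 hp
  simp at this
  tauto

lemma tk_card_S (Y D : ℕ) : (tkS Y D).card ≤ D + 1 := by
  rw [← Finset.card_range (D + 1)]
  refine Finset.card_le_card_of_injOn (fun s => ∏ p ∈ s, p) ?_ ?_
  · intro s hs
    have := (tk_mem_S hs).2
    simp; omega
  · intro s hs t ht h
    have h1 := Nat.primeFactors_prod (s := s) (fun p hp => ((tk_mem_S hs).1 p hp).1)
    have h2 := Nat.primeFactors_prod (s := t) (fun p hp => ((tk_mem_S ht).1 p hp).1)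
    simp only at h
    rw [← h1, ← h2, h]

lemma tk_abs_h {p : ℕ} (hp : p.Prime) (n : ℕ) : |tkh p n| ≤ 1 := by
  have := tk_prime_pos hp
  unfold tkh
  split_ifs
  · simp
  · rw [abs_of_nonneg (by positivity), div_le_one (by linarith)]; exact this

lemma tk_abs_g {s : Finset ℕ} (hs : ∀ p ∈ s, p.Prime) (n : ℕ) : |tkg s n| ≤ 1 := by
  unfold tkg
  rw [Finset.abs_prod]
  exact Finset.prod_le_one (fun _ _ => abs_nonneg _) (fun p hp => tk_abs_h (hs p hp) n)

lemma tk_g_mul (s t : Finset ℕ) (n : ℕ) : tkg s n * tkg t n =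
    ∏ p ∈ s ∪ t, ((if p ∈ s then tkh p n else 1) * (if p ∈ t then tkh p n else 1)) := by
  rw [Finset.prod_mul_distrib, Finset.prod_ite_mem, Finset.prod_ite_mem,
    Finset.inter_eq_right.2 Finset.subset_union_left,
    Finset.inter_eq_right.2 Finset.subset_union_right]
  rfl

lemma tk_per_hh (s t : Finset ℕ) (p : ℕ) : Function.Periodic
    (fun n => (if p ∈ s then tkh p n else 1) * (if p ∈ t then tkh p n else 1)) p := by
  intro n
  simp only [tk_per_h p n]

lemma tk_per_gg (s t : Finset ℕ) :
    Function.Periodic (fun n => tkg s n * tkg t n) (∏ p ∈ s ∪ t, p) := by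
  simp only [tk_g_mul]
  exact tk_periodic_prod (s ∪ t) _ (fun p _ => tk_per_hh s t p)
    (fun p hp => Finset.dvd_prod_of_mem _ hp)

lemma tk_mean_gg {s t : Finset ℕ} (hs : ∀ p ∈ s, p.Prime) (ht : ∀ p ∈ t, p.Prime) :
    tkMean (∏ p ∈ s ∪ t, p) (fun n => tkg s n * tkg t n) =
      if s = t then ∏ p ∈ s, (1 / ((p:ℝ) - 1)) else 0 := by
  have hst : ∀ p ∈ s ∪ t, p.Prime := by
    intro p hp; rcases Finset.mem_union.1 hp with h | h
    · exact hs p h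
    · exact ht p h
  simp only [tk_g_mul]
  rw [tk_mean_prod (s ∪ t) hst _ (fun p _ => tk_per_hh s t p)]
  split_ifs with h
  · subst h
    rw [Finset.union_self]
    refine Finset.prod_congr rfl fun p hp => ?_
    simp only [hp, if_true]
    exact tk_mean_hh (hs p hp)
  · have : ∃ p ∈ s ∪ t, ¬ (p ∈ s ↔ p ∈ t) := by
      by_contra hcon
      push Not at hcon
      apply h
      ext p
      by_cases hp : p ∈ s ∪ t
      · exact hcon p hp
      · simp only [Finset.mem_union, not_or] at hp
        tauto
    obtain ⟨p, hp, hne⟩ := this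
    refine Finset.prod_eq_zero hp ?_
    by_cases h1 : p ∈ s <;> by_cases h2 : p ∈ t
    · tauto
    · simp only [h1, h2, if_true, if_false, mul_one]; exact tk_mean_h (hs p h1)
    · simp only [h1, h2, if_true, if_false, one_mul]; exact tk_mean_h (ht p h2)
    · tauto

lemma tk_sieve {Y D : ℕ} {Q : Finset ℕ} (hQ : ∀ p ∈ Q, p.Prime ∧ p ≤ Y) {T : ℕ → ℝ}
    (hT : Function.Periodic T (∏ p ∈ Q, p)) {B : ℝ} (hB : ∀ n, |T n| ≤ B) (N : ℕ) :
    ∑ n ∈ Finset.range N, T n * (∑ s ∈ tkS Y D, tkg s n) ^ 2 ≤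
      N * tkMean (∏ p ∈ Q, p) T * tkH Y D +
        2 * ((D:ℝ) + 1) ^ 4 * (∏ p ∈ Q, p : ℕ) * B := by
  have hB0 : 0 ≤ B := (abs_nonneg _).trans (hB 0)
  set P := ∏ p ∈ Q, p with hP
  have hPpos : 0 < P := Finset.prod_pos fun p hp => (hQ p hp).1.pos
  have h1 : ∑ n ∈ Finset.range N, T n * (∑ s ∈ tkS Y D, tkg s n) ^ 2 =
      ∑ s ∈ tkS Y D, ∑ t ∈ tkS Y D, ∑ n ∈ Finset.range N, T n * (tkg s n * tkg t n) := by
    have : ∀ n, T n * (∑ s ∈ tkS Y D, tkg s n) ^ 2 =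
        ∑ s ∈ tkS Y D, ∑ t ∈ tkS Y D, T n * (tkg s n * tkg t n) := by
      intro n
      rw [sq, Finset.sum_mul_sum, Finset.mul_sum]
      simp only [Finset.mul_sum]
    simp only [this]
    rw [Finset.sum_comm]
    refine Finset.sum_congr rfl fun s _ => ?_
    rw [Finset.sum_comm]
  have h2 : ∀ s ∈ tkS Y D, ∀ t ∈ tkS Y D, ∑ n ∈ Finset.range N, T n * (tkg s n * tkg t n) ≤
      N * tkMean P T * (if s = t then ∏ p ∈ s, (1 / ((p:ℝ) - 1)) else 0) +
        2 * ((D:ℝ) + 1) ^ 2 * P * B := by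
    intro s hs t ht
    obtain ⟨hs1, hs2⟩ := tk_mem_S hs
    obtain ⟨ht1, ht2⟩ := tk_mem_S ht
    have hsp : ∀ p ∈ s, p.Prime := fun p hp => (hs1 p hp).1
    have htp : ∀ p ∈ t, p.Prime := fun p hp => (ht1 p hp).1
    set K := ∏ p ∈ s ∪ t, p with hK
    have hst : ∀ p ∈ s ∪ t, p.Prime ∧ Y < p := by
      intro p hp; rcases Finset.mem_union.1 hp with h | h
      · exact ⟨hsp p h, (hs1 p h).2.1⟩
      · exact ⟨htp p h, (ht1 p h).2.1⟩
    have hKpos : 0 < K := Finset.prod_pos fun p hp => (hst p hp).1.pos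
    have hcop : P.Coprime K := by
      refine Nat.Coprime.prod_left fun p hp => Nat.Coprime.prod_right fun q hq => ?_
      refine (Nat.coprime_primes (hQ p hp).1 (hst q hq).1).2 ?_
      have := (hQ p hp).2
      have := (hst q hq).2
      omega
    have hper : Function.Periodic (fun n => T n * (tkg s n * tkg t n)) (P * K : ℕ) := by
      intro n
      have e1 := (hT.nat_mul K) n
      have e2 := ((tk_per_gg s t).nat_mul P) n
      simp only [Nat.cast_id] at e1 e2
      simp only
      rw [← e2, ← e1]
      congr 2
      ring
    have hb : ∀ n, |T n * (tkg s n * tkg t n)| ≤ B := by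
      intro n
      rw [abs_mul, abs_mul]
      have a1 := tk_abs_g hsp n
      have a2 := tk_abs_g htp n
      calc |T n| * (|tkg s n| * |tkg t n|) ≤ B * (1 * 1) := by
            gcongr
            exact hB n
        _ = B := by ring
    have := tk_sum_le_mean (Nat.mul_pos hPpos hKpos) hper hb N
    rw [tk_mean_mul hPpos hKpos hcop hT (tk_per_gg s t), hK, tk_mean_gg hsp htp, ← hK] at this
    refine this.trans ?_
    have hKle : K ≤ (D + 1) ^ 2 := by
      have : K ≤ (∏ p ∈ s, p) * ∏ p ∈ t, p := by
        rw [← Finset.prod_union_inter]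
        exact Nat.le_mul_of_pos_right _ (Finset.prod_pos fun p hp =>
          (hsp p (Finset.mem_inter.1 hp).1).pos)
      calc K ≤ _ := this
        _ ≤ D * D := Nat.mul_le_mul hs2 ht2
        _ ≤ _ := by nlinarith
    have hKr : (K:ℝ) ≤ ((D:ℝ) + 1) ^ 2 := by exact_mod_cast hKle
    rw [← mul_assoc]
    refine add_le_add le_rfl ?_
    push_cast
    calc 2 * ((P:ℝ) * K) * B ≤ 2 * ((P:ℝ) * ((D:ℝ) + 1) ^ 2) * B := by gcongr
      _ = _ := by ring
  rw [h1]
  refine (Finset.sum_le_sum fun s hs => Finset.sum_le_sum fun t ht => h2 s hs t ht).trans ?_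
  simp only [Finset.sum_add_distrib, ← Finset.mul_sum, Finset.sum_const, nsmul_eq_mul]
  have hc : ((tkS Y D).card : ℝ) ≤ (D:ℝ) + 1 := by exact_mod_cast tk_card_S Y D
  refine add_le_add (le_of_eq ?_) ?_
  · congr 1
    unfold tkH
    refine Finset.sum_congr rfl fun s hs => ?_
    simp [hs]
  · calc 2 * ((D:ℝ) + 1) ^ 2 * P * ((tkS Y D).card * ((tkS Y D).card * B))
        ≤ 2 * ((D:ℝ) + 1) ^ 2 * P * (((D:ℝ) + 1) * (((D:ℝ) + 1) * B)) := by gcongr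
      _ = _ := by ring

noncomputable def tkInv : ℕ →* ℝ where
  toFun n := ((n : ℝ))⁻¹
  map_one' := by simp
  map_mul' := by intro a b; push_cast; rw [mul_inv]

lemma tk_euler (s : Finset ℕ) (hs : ∀ p ∈ s, p.Prime) (A : Finset ℕ)
    (hA : ∀ n ∈ A, n ∈ Nat.factoredNumbers s) :
    ∑ n ∈ A, ((n:ℝ))⁻¹ ≤ ∏ p ∈ s, (1 - ((p:ℝ))⁻¹)⁻¹ := by
  have h := (EulerProduct.summable_and_hasSum_factoredNumbers_prod_filter_prime_geometric
    (f := tkInv) (by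
      intro p hp
      have := tk_prime_pos hp
      have h0 : (1:ℝ) < p := by linarith
      change ‖((p:ℝ))⁻¹‖ < 1
      rw [norm_inv, Real.norm_natCast]
      exact inv_lt_one_of_one_lt₀ h0) s).2
  rw [Finset.filter_true_of_mem hs] at h
  have h2 := sum_le_hasSum (A.attach.map ⟨fun x => (⟨x.1, hA x.1 x.2⟩ : Nat.factoredNumbers s), by
    intro a b hab; exact Subtype.ext (congrArg (fun z : Nat.factoredNumbers s => z.1) hab)⟩) (fun i _ => by
      change 0 ≤ (((i : ℕ):ℝ))⁻¹; positivity) h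
  rw [Finset.sum_map] at h2
  have h3 : ∑ x ∈ A.attach, ((x.1:ℝ))⁻¹ = ∑ n ∈ A, ((n:ℝ))⁻¹ :=
    Finset.sum_attach A (fun n : ℕ => ((n:ℝ))⁻¹)
  rw [← h3]
  exact h2

lemma tk_H_lower (Y D : ℕ) :
    Real.log (D + 1 : ℕ) ≤ tkH Y D * ∏ p ∈ Nat.primesLE Y, (1 - ((p:ℝ))⁻¹)⁻¹ := by
  refine (log_add_one_le_harmonic D).trans ?_
  rw [harmonic_eq_sum_Icc]
  push_cast
  set F : ℕ → Finset ℕ := fun n => n.primeFactors.filter (fun p => Y < p) with hF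
  have hFdvd : ∀ n, ∏ p ∈ F n, p ∣ n := fun n =>
    (Finset.prod_dvd_prod_of_subset _ _ _ (Finset.filter_subset _ _)).trans
      (Nat.prod_primeFactors_dvd n)
  have hmaps : ∀ n ∈ Finset.Icc 1 D, F n ∈ tkS Y D := by
    intro n hn
    rw [Finset.mem_Icc] at hn
    unfold tkS
    rw [Finset.mem_filter, Finset.mem_powerset]
    refine ⟨fun p hp => ?_, (Nat.le_of_dvd (by omega) (hFdvd n)).trans hn.2⟩
    simp only [hF, Finset.mem_filter, Nat.mem_primeFactors] at hp
    have := Nat.le_of_dvd (by omega) hp.1.2.1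
    simp; exact ⟨⟨hp.2, by omega⟩, hp.1.1⟩
  rw [← Finset.sum_fiberwise_of_maps_to hmaps]
  unfold tkH
  rw [Finset.sum_mul]
  refine Finset.sum_le_sum fun s hs => ?_
  obtain ⟨hs1, hs2⟩ := tk_mem_S hs
  set m := ∏ p ∈ s, p with hm
  have hmpos : 0 < m := Finset.prod_pos fun p hp => (hs1 p hp).1.pos
  have hdisj : Disjoint s (Nat.primesLE Y) := by
    rw [Finset.disjoint_left]
    intro p hp hp'
    have := (hs1 p hp).2.1
    have := Nat.le_of_mem_primesLE hp'
    omega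
  set A := (Finset.Icc 1 D).filter (fun n => F n = s) with hA
  have hAd : ∀ n ∈ A, m ∣ n ∧ n ≠ 0 := by
    intro n hn
    simp only [hA, Finset.mem_filter, Finset.mem_Icc] at hn
    refine ⟨?_, by omega⟩
    have := hFdvd n
    rwa [hn.2] at this
  have hinj : Set.InjOn (fun n => n / m) (A : Set ℕ) := by
    intro a ha b hb hab
    simp only at hab
    rw [← Nat.div_mul_cancel (hAd a ha).1, ← Nat.div_mul_cancel (hAd b hb).1, hab]
  have hE := tk_euler (s ∪ Nat.primesLE Y) (by
    intro p hp
    rcases Finset.mem_union.1 hp with h | h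
    · exact (hs1 p h).1
    · exact Nat.prime_of_mem_primesLE h) (A.image (fun n => n / m)) (by
    intro k hk
    obtain ⟨n, hn, rfl⟩ := Finset.mem_image.1 hk
    have hd := hAd n hn
    refine Nat.mem_factoredNumbers_of_dvd (m := n) ?_ (Nat.div_dvd_of_dvd hd.1)
    refine Nat.mem_factoredNumbers'.2 fun p hp hpn => ?_
    simp only [hA, Finset.mem_filter] at hn
    rw [Finset.mem_union]
    by_cases hpY : p ≤ Y
    · right; exact Nat.mem_primesLE.2 ⟨hpY, hp⟩
    · left
      rw [← hn.2]
      simp only [hF, Finset.mem_filter, Nat.mem_primeFactors]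
      exact ⟨⟨hp, hpn, hd.2⟩, by omega⟩)
  rw [Finset.sum_image hinj, Finset.prod_union hdisj] at hE
  have hsum : ∑ n ∈ A, ((n:ℝ))⁻¹ = ((m:ℝ))⁻¹ * ∑ n ∈ A, (((n / m : ℕ):ℝ))⁻¹ := by
    rw [Finset.mul_sum]
    refine Finset.sum_congr rfl fun n hn => ?_
    rw [← mul_inv]
    congr 1
    have := Nat.mul_div_cancel' (hAd n hn).1
    exact_mod_cast this.symm
  rw [hsum]
  have hprod : ∏ p ∈ s, (1 / ((p:ℝ) - 1)) = ((m:ℝ))⁻¹ * ∏ p ∈ s, (1 - ((p:ℝ))⁻¹)⁻¹ := by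
    rw [hm]; push_cast
    rw [← Finset.prod_inv_distrib, ← Finset.prod_mul_distrib]
    refine Finset.prod_congr rfl fun p hp => ?_
    have := tk_prime_pos (hs1 p hp).1
    have h2 : (p:ℝ) - 1 ≠ 0 := by linarith
    have h3 : (p:ℝ) ≠ 0 := by linarith
    rw [← mul_inv, mul_sub, mul_inv_cancel₀ h3, mul_one, one_div]
  rw [hprod, mul_assoc]
  exact mul_le_mul_of_nonneg_left hE (by positivity)

lemma tk_V_pos (Y : ℕ) : 0 < ∏ p ∈ Nat.primesLE Y, (1 - 1 / (p:ℝ)) := by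
  refine Finset.prod_pos fun p hp => ?_
  have := tk_prime_pos (Nat.prime_of_mem_primesLE hp)
  rw [sub_pos, div_lt_one (by linarith)]; linarith

lemma tk_V_log (Y D : ℕ) :
    Real.log (D + 1 : ℕ) * ∏ p ∈ Nat.primesLE Y, (1 - 1 / (p:ℝ)) ≤ tkH Y D := by
  have := tk_H_lower Y D
  rw [Finset.prod_inv_distrib, ← div_eq_mul_inv] at this
  simp only [← one_div] at this
  rwa [le_div_iff₀ (tk_V_pos Y)] at this

lemma tk_one_le_H (Y D : ℕ) (hD : 1 ≤ D) : 1 ≤ tkH Y D := by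
  unfold tkH
  have h0 : (∅ : Finset ℕ) ∈ tkS Y D := by simp [tkS, hD]
  calc (1:ℝ) = ∏ p ∈ (∅ : Finset ℕ), (1 / ((p:ℝ) - 1)) := by simp
    _ ≤ _ := Finset.single_le_sum (f := fun s : Finset ℕ => ∏ p ∈ s, (1 / ((p:ℝ) - 1))) (fun s hs => Finset.prod_nonneg fun p hp => by
      have := tk_prime_pos ((tk_mem_S hs).1 p hp).1
      positivity) h0

lemma tk_mertens_lower (Y : ℕ) (hY : 1 ≤ Y) :
    Real.log (Real.log (Y + 1 : ℕ)) ≤ ∑ p ∈ Nat.primesLE Y, 1 / ((p:ℝ) - 1) := by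
  have h := tk_V_log Y Y
  have hH : tkH Y Y = 1 := by
    have : tkS Y Y = {∅} := by
      unfold tkS
      rw [Finset.Ioc_self]
      ext s
      simp
      rintro rfl
      simp; omega
    simp [tkH, this]
  rw [hH] at h
  have hlog : 0 < Real.log (Y + 1 : ℕ) := Real.log_pos (by push_cast; have : (1:ℝ) ≤ Y := by exact_mod_cast hY
                                                           linarith)
  have hV := tk_V_pos Y
  have h2 := Real.log_le_log (by positivity) h
  rw [Real.log_one, Real.log_mul hlog.ne' hV.ne', Real.log_prod (fun p hp => by
    have := tk_prime_pos (Nat.prime_of_mem_primesLE hp)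
    have : 1 / (p:ℝ) < 1 := by rw [div_lt_one (by linarith)]; linarith
    linarith)] at h2
  have h3 : -∑ p ∈ Nat.primesLE Y, Real.log (1 - 1 / (p:ℝ)) ≤ ∑ p ∈ Nat.primesLE Y, 1 / ((p:ℝ) - 1) := by
    rw [← Finset.sum_neg_distrib]
    refine Finset.sum_le_sum fun p hp => ?_
    have h1 := tk_prime_pos (Nat.prime_of_mem_primesLE hp)
    have hne : (p:ℝ) - 1 ≠ 0 := by linarith
    have hne' : (p:ℝ) ≠ 0 := by linarith
    have hlt : 1 / (p:ℝ) < 1 := by rw [div_lt_one (by linarith)]; linarith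
    rw [← Real.log_inv]
    refine (Real.log_le_sub_one_of_pos (inv_pos.2 (by linarith))).trans (le_of_eq ?_)
    have : 1 - 1 / (p:ℝ) = (p - 1) / p := by field_simp
    rw [this, inv_div]; field_simp; ring
  linarith

lemma tk_pow_dvd_factorial (p k : ℕ) (hp : 0 < p) : p ^ k ∣ (p * k).factorial := by
  induction k with
  | zero => simp
  | succ k ih =>
    rw [pow_succ, Nat.mul_succ]
    exact (mul_dvd_mul ih (Nat.dvd_factorial hp le_rfl)).trans
      (Nat.factorial_mul_factorial_dvd_factorial_add _ _)

lemma tk_sum_log_div (n : ℕ) (hn : 1 ≤ n) :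
    ∑ p ∈ Nat.primesLE n, Real.log p / p ≤ Real.log n + Real.log 4 := by
  have hdvd : ∏ p ∈ Nat.primesLE n, p ^ (n / p) ∣ n.factorial := by
    refine Finset.prod_dvd_of_isRelPrime ?_ ?_
    · intro p hp q hq hpq
      have h1 := Nat.prime_of_mem_primesLE hp
      have h2 := Nat.prime_of_mem_primesLE hq
      exact Nat.coprime_iff_isRelPrime.1 (Nat.coprime_pow_primes _ _ h1 h2 hpq)
    · intro p hp
      have h1 := Nat.prime_of_mem_primesLE hp
      exact (tk_pow_dvd_factorial p (n / p) h1.pos).trans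
        (Nat.factorial_dvd_factorial (Nat.mul_div_le n p))
  have hle := Nat.le_of_dvd (Nat.factorial_pos n) hdvd
  have hle2 : ∏ p ∈ Nat.primesLE n, p ^ (n / p) ≤ n ^ n := hle.trans (Nat.factorial_le_pow n)
  have hle3 : (∏ p ∈ Nat.primesLE n, (p:ℝ) ^ (n / p)) ≤ (n:ℝ) ^ n := by exact_mod_cast hle2
  have hpos : ∀ p ∈ Nat.primesLE n, (0:ℝ) < (p:ℝ) ^ (n / p) := fun p hp => by
    have := (Nat.prime_of_mem_primesLE hp).pos
    positivity
  have h4 := Real.log_le_log (Finset.prod_pos hpos) hle3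
  rw [Real.log_prod (fun p hp => (hpos p hp).ne'), Real.log_pow] at h4
  simp only [Real.log_pow] at h4
  have h5 := Chebyshev.theta_le_log4_mul_x (x := n) (by positivity)
  rw [Chebyshev.theta_eq_sum_primesLE_log] at h5
  have hnr : (0:ℝ) < n := by exact_mod_cast hn
  have h6 : n * ∑ p ∈ Nat.primesLE n, Real.log p / p ≤
      ∑ p ∈ Nat.primesLE n, ((n / p : ℕ) : ℝ) * Real.log p + ∑ p ∈ Nat.primesLE n, Real.log p := by
    rw [Finset.mul_sum, ← Finset.sum_add_distrib]
    refine Finset.sum_le_sum fun p hp => ?_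
    have h1 := tk_prime_pos (Nat.prime_of_mem_primesLE hp)
    have hl : 0 ≤ Real.log p := Real.log_natCast_nonneg p
    have : (n:ℝ) / p ≤ (n / p : ℕ) + 1 := by
      have := (Nat.lt_floor_add_one ((n:ℝ) / p)).le
      rwa [Nat.floor_div_natCast, Nat.floor_natCast] at this
    calc (n:ℝ) * (Real.log p / p) = (n / p) * Real.log p := by ring
      _ ≤ ((n / p : ℕ) + 1) * Real.log p := by gcongr
      _ = _ := by ring
  have h7 : (n:ℝ) * ∑ p ∈ Nat.primesLE n, Real.log p / p ≤ n * (Real.log n + Real.log 4) := by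
    linarith
  exact le_of_mul_le_mul_left h7 hnr

lemma tk_mertens_upper_aux : ∃ K : ℝ, ∀ n : ℕ, 2 ≤ n →
    ∑ p ∈ Nat.primesLE n, 1 / (p:ℝ) -
      (∑ p ∈ Nat.primesLE n, Real.log p / p) / Real.log n ≤
      Real.log (Real.log n) - Real.log 4 / Real.log n + K := by
  refine ⟨∑ p ∈ Nat.primesLE 2, 1 / (p:ℝ) -
      (∑ p ∈ Nat.primesLE 2, Real.log p / p) / Real.log (2:ℕ) -
      (Real.log (Real.log (2:ℕ)) - Real.log 4 / Real.log (2:ℕ)), ?_⟩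
  intro n hn
  induction n, hn using Nat.le_induction with
  | base => linarith
  | succ n hn ih =>
    have hl : 0 < Real.log n := Real.log_pos (by exact_mod_cast hn)
    have hl1 : 0 < Real.log (n + 1 : ℕ) := Real.log_pos (by exact_mod_cast (by omega : 1 < n + 1))
    have hmono : Real.log n ≤ Real.log (n + 1 : ℕ) := by
      apply Real.log_le_log
      · exact_mod_cast (by omega : 0 < n)
      · push_cast; linarith
    have hA := tk_sum_log_div n (by omega)
    set A := ∑ p ∈ Nat.primesLE n, Real.log p / p with hAdef
    have hstep : ∑ p ∈ Nat.primesLE (n + 1), 1 / (p:ℝ) -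
        (∑ p ∈ Nat.primesLE (n + 1), Real.log p / p) / Real.log (n + 1 : ℕ) =
        ∑ p ∈ Nat.primesLE n, 1 / (p:ℝ) - A / Real.log (n + 1 : ℕ) := by
      rw [Nat.primesLE_succ]
      split_ifs with hpr
      · rw [Finset.sum_insert (Nat.notMem_primesLE n), Finset.sum_insert (Nat.notMem_primesLE n)]
        have : ((n + 1 : ℕ) : ℝ) ≠ 0 := by positivity
        field_simp
        ring
      · rfl
    rw [hstep]
    have hd : 0 ≤ 1 / Real.log n - 1 / Real.log (n + 1 : ℕ) := by
      rw [sub_nonneg]; exact one_div_le_one_div_of_le hl hmono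
    have h1 : A * (1 / Real.log n - 1 / Real.log (n + 1 : ℕ)) ≤
        (Real.log n + Real.log 4) * (1 / Real.log n - 1 / Real.log (n + 1 : ℕ)) :=
      mul_le_mul_of_nonneg_right hA hd
    have h2 : Real.log n * (1 / Real.log n - 1 / Real.log (n + 1 : ℕ)) ≤
        Real.log (Real.log (n + 1 : ℕ)) - Real.log (Real.log n) := by
      have := Real.log_le_sub_one_of_pos (div_pos hl hl1)
      rw [Real.log_div hl.ne' hl1.ne'] at this
      have e : Real.log n * (1 / Real.log n - 1 / Real.log (n + 1 : ℕ)) =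
        1 - Real.log n / Real.log (n + 1 : ℕ) := by field_simp
      rw [e]; linarith
    have e1 : A * (1 / Real.log n - 1 / Real.log (n + 1 : ℕ)) =
        A / Real.log n - A / Real.log (n + 1 : ℕ) := by ring
    have e2 : (Real.log n + Real.log 4) * (1 / Real.log n - 1 / Real.log (n + 1 : ℕ)) =
        Real.log n * (1 / Real.log n - 1 / Real.log (n + 1 : ℕ)) +
        Real.log 4 / Real.log n - Real.log 4 / Real.log (n + 1 : ℕ) := by ring
    linarith

lemma tk_mertens_upper : ∃ K : ℝ, ∀ n : ℕ, 2 ≤ n →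
    ∑ p ∈ Nat.primesLE n, 1 / ((p:ℝ) - 1) ≤ Real.log (Real.log n) + K := by
  obtain ⟨K, hK⟩ := tk_mertens_upper_aux
  refine ⟨K + 2, fun n hn => ?_⟩
  have hl : 0 < Real.log n := Real.log_pos (by exact_mod_cast hn)
  have h1 := hK n hn
  have hA := tk_sum_log_div n (by omega)
  have h2 : (∑ p ∈ Nat.primesLE n, Real.log p / p) / Real.log n ≤ 1 + Real.log 4 / Real.log n := by
    rw [div_le_iff₀ hl, add_mul, div_mul_cancel₀ _ hl.ne']; linarith
  have h3 : ∑ p ∈ Nat.primesLE n, 1 / ((p:ℝ) - 1) ≤ ∑ p ∈ Nat.primesLE n, 1 / (p:ℝ) + 1 := by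
    have h4 : ∑ k ∈ Finset.Icc 2 n, (1 / ((k:ℝ) - 1) - 1 / (k:ℝ)) = 1 - 1 / (n:ℝ) := by
      clear h1 h2 hA hl
      induction n, hn using Nat.le_induction with
      | base => norm_num
      | succ n hn ih =>
        rw [Finset.sum_Icc_succ_top (by omega), ih]
        push_cast
        ring
    have h5 : ∑ p ∈ Nat.primesLE n, (1 / ((p:ℝ) - 1) - 1 / (p:ℝ)) ≤
        ∑ k ∈ Finset.Icc 2 n, (1 / ((k:ℝ) - 1) - 1 / (k:ℝ)) := by
      refine Finset.sum_le_sum_of_subset_of_nonneg ?_ ?_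
      · intro p hp
        exact Finset.mem_Icc.2 ⟨Nat.two_le_of_mem_primesLE hp, Nat.le_of_mem_primesLE hp⟩
      · intro k hk _
        have : (2:ℝ) ≤ k := by exact_mod_cast (Finset.mem_Icc.1 hk).1
        rw [sub_nonneg]
        exact one_div_le_one_div_of_le (by linarith) (by linarith)
    rw [Finset.sum_sub_distrib] at h5
    have : (0:ℝ) ≤ 1 / (n:ℝ) := by positivity
    linarith
  linarith

lemma tk_e_range (p n : ℕ) : 0 ≤ tke p n ∧ tke p n ≤ 1 := by
  unfold tke; split_ifs <;> norm_num

lemma tk_d_range (c : ℤ) (p n : ℕ) : 0 ≤ tkd c p n ∧ tkd c p n ≤ 1 := by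
  unfold tkd; split_ifs <;> norm_num

lemma tk_sq_le (c : ℤ) (Y n : ℕ) (L : ℝ) :
    (∑ q ∈ Nat.primesLE Y, tkd c q n - L) ^ 2 ≤ ((Y:ℝ) + |L|) ^ 2 := by
  have h0 : 0 ≤ ∑ q ∈ Nat.primesLE Y, tkd c q n :=
    Finset.sum_nonneg fun q _ => (tk_d_range c q n).1
  have hcard : (Nat.primesLE Y).card ≤ Y := by
    rw [Nat.primesLE_eq_filter_Icc_one]
    refine (Finset.card_filter_le _ _).trans ?_
    simp
  have h1 : ∑ q ∈ Nat.primesLE Y, tkd c q n ≤ Y := by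
    calc _ ≤ ∑ q ∈ Nat.primesLE Y, (1:ℝ) := Finset.sum_le_sum fun q _ => (tk_d_range c q n).2
      _ = (Nat.primesLE Y).card := by simp
      _ ≤ Y := by exact_mod_cast hcard
  have h2 := neg_abs_le L
  have h3 := le_abs_self L
  have h4 := abs_nonneg L
  apply sq_le_sq'
  · linarith
  · linarith

lemma tk_T_per (c : ℤ) (Q : Finset ℕ) (L : ℝ) : Function.Periodic (tkT c Q L) (∏ p ∈ Q, p) := by
  intro n
  have h1 := tk_periodic_prod Q tke (fun p _ => tk_per_e p) (M := ∏ p ∈ Q, p)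
    (fun p hp => Finset.dvd_prod_of_mem _ hp) n
  have h2 : ∀ q ∈ Q, tkd c q (n + ∏ p ∈ Q, p) = tkd c q n := by
    intro q hq
    obtain ⟨k, hk⟩ := Finset.dvd_prod_of_mem (fun p : ℕ => p) hq
    have := (tk_per_d c q).nat_mul k n
    rw [← this]
    congr 1
    rw [hk]; simp; ring
  unfold tkT
  simp only at h1
  rw [h1, Finset.sum_congr rfl h2]

lemma tk_finite (c : ℤ) (Y D N : ℕ) (L : ℝ) (hYD : Y ≤ D) (hD : 1 ≤ D) :
    ∑ p ∈ Nat.primesLE N, (∑ q ∈ Nat.primesLE Y, tkd c q p - L) ^ 2 ≤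
      ((N:ℝ) + 1) * (∑ q ∈ Nat.primesLE Y, tkrho c q + (∑ q ∈ Nat.primesLE Y, tkrho c q - L) ^ 2)
        / Real.log (D + 1 : ℕ) + 3 * ((D:ℝ) + 1) ^ 4 * 4 ^ Y * ((Y:ℝ) + |L|) ^ 2 := by
  set B := ((Y:ℝ) + |L|) ^ 2 with hB
  have hB0 : 0 ≤ B := by positivity
  set Q := Nat.primesLE Y with hQ
  set R := ∑ q ∈ Q, tkrho c q with hR
  have hR0 : 0 ≤ R := Finset.sum_nonneg fun q hq => tk_rho_nonneg c (Nat.prime_of_mem_primesLE hq)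
  set H := tkH Y D with hH
  have hH1 : 1 ≤ H := tk_one_le_H Y D hD
  have hlog : 0 < Real.log (D + 1 : ℕ) := Real.log_pos (by exact_mod_cast (by omega : 1 < D + 1))
  have hPle : (∏ p ∈ Q, p) ≤ 4 ^ Y := primorial_le_four_pow Y
  have hPr : ((∏ p ∈ Q, p : ℕ) : ℝ) ≤ 4 ^ Y := by exact_mod_cast hPle
  have hTB : ∀ n, |tkT c Q L n| ≤ B := by
    intro n
    have he0 : 0 ≤ ∏ p ∈ Q, tke p n := Finset.prod_nonneg fun p _ => (tk_e_range p n).1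
    have he1 : ∏ p ∈ Q, tke p n ≤ 1 :=
      Finset.prod_le_one (fun p _ => (tk_e_range p n).1) (fun p _ => (tk_e_range p n).2)
    unfold tkT
    rw [abs_of_nonneg (by positivity)]
    calc _ ≤ 1 * B := mul_le_mul he1 (tk_sq_le c Y n L) (by positivity) (by norm_num)
      _ = B := one_mul B
  have hT0 : ∀ n, 0 ≤ tkT c Q L n := fun n => by
    have he0 : 0 ≤ ∏ p ∈ Q, tke p n := Finset.prod_nonneg fun p _ => (tk_e_range p n).1
    unfold tkT; positivity
  have hsieve := tk_sieve (Y := Y) (D := D) (Q := Q)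
    (fun p hp => ⟨Nat.prime_of_mem_primesLE hp, Nat.le_of_mem_primesLE hp⟩)
    (tk_T_per c Q L) hTB (N + 1)
  have hmean := tk_mean_T c Q L (fun p hp => Nat.prime_of_mem_primesLE hp)
  rw [← hR] at hmean
  set V := ∏ p ∈ Q, (1 - 1 / (p:ℝ)) with hV
  have hV0 : 0 < V := tk_V_pos Y
  have hVH : Real.log (D + 1 : ℕ) * V ≤ H := tk_V_log Y D
  set E := R + (R - L) ^ 2 with hE
  have hE0 : 0 ≤ E := by positivity
  -- large primes
  have hlarge : H ^ 2 * ∑ p ∈ (Nat.primesLE N).filter (fun p => ¬ p ≤ D),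
      (∑ q ∈ Q, tkd c q p - L) ^ 2 ≤
      ∑ n ∈ Finset.range (N + 1), tkT c Q L n * (∑ s ∈ tkS Y D, tkg s n) ^ 2 := by
    rw [Finset.mul_sum]
    have hterm : ∀ p ∈ (Nat.primesLE N).filter (fun p => ¬ p ≤ D),
        H ^ 2 * (∑ q ∈ Q, tkd c q p - L) ^ 2 =
        tkT c Q L p * (∑ s ∈ tkS Y D, tkg s p) ^ 2 := by
      intro p hp
      rw [Finset.mem_filter] at hp
      have hpp := Nat.prime_of_mem_primesLE hp.1
      have hnd : ∀ q, q.Prime → q ≤ D → ¬ q ∣ p := by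
        intro q hq hqD hqp
        have := (Nat.prime_dvd_prime_iff_eq hq hpp).1 hqp
        omega
      have h1 : ∏ q ∈ Q, tke q p = 1 := by
        refine Finset.prod_eq_one fun q hq => ?_
        unfold tke
        rw [if_neg (hnd q (Nat.prime_of_mem_primesLE hq) ((Nat.le_of_mem_primesLE hq).trans hYD))]
      have h2 : ∑ s ∈ tkS Y D, tkg s p = H := by
        rw [hH]; unfold tkH
        refine Finset.sum_congr rfl fun s hs => ?_
        unfold tkg
        refine Finset.prod_congr rfl fun q hq => ?_
        have := (tk_mem_S hs).1 q hq
        unfold tkh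
        rw [if_neg (hnd q this.1 this.2.2)]
      unfold tkT
      rw [h1, h2]; ring
    rw [Finset.sum_congr rfl hterm]
    refine Finset.sum_le_sum_of_subset_of_nonneg ?_ ?_
    · intro p hp
      rw [Finset.mem_filter] at hp
      have := Nat.le_of_mem_primesLE hp.1
      rw [Finset.mem_range]; omega
    · intro n _ _
      have := hT0 n
      positivity
  have hsmall : ∑ p ∈ (Nat.primesLE N).filter (fun p => p ≤ D),
      (∑ q ∈ Q, tkd c q p - L) ^ 2 ≤ ((D:ℝ) + 1) * B := by
    have hcard : ((Nat.primesLE N).filter (fun p => p ≤ D)).card ≤ D + 1 := by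
      rw [← Finset.card_range (D + 1)]
      refine Finset.card_le_card fun p hp => ?_
      rw [Finset.mem_filter] at hp
      rw [Finset.mem_range]; omega
    calc _ ≤ ∑ p ∈ (Nat.primesLE N).filter (fun p => p ≤ D), B :=
          Finset.sum_le_sum fun p _ => tk_sq_le c Y p L
      _ = ((Nat.primesLE N).filter (fun p => p ≤ D)).card * B := by simp
      _ ≤ ((D:ℝ) + 1) * B := by
        gcongr
        exact_mod_cast hcard
  set S2 := ∑ p ∈ (Nat.primesLE N).filter (fun p => ¬ p ≤ D), (∑ q ∈ Q, tkd c q p - L) ^ 2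
    with hS2
  have hS20 : 0 ≤ S2 := Finset.sum_nonneg fun _ _ => sq_nonneg _
  set Z := 2 * ((D:ℝ) + 1) ^ 4 * 4 ^ Y * B with hZ
  have hZ0 : 0 ≤ Z := by positivity
  have hbig : H ^ 2 * S2 ≤ H ^ 2 * (((N:ℝ) + 1) * E / Real.log (D + 1 : ℕ) + Z) := by
    calc H ^ 2 * S2 ≤ _ := hlarge.trans hsieve
      _ ≤ ((N:ℝ) + 1) * (V * E) * H + Z := by
        push_cast at hPr ⊢
        refine add_le_add ?_ ?_
        · gcongr
        · rw [hZ]; gcongr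
      _ ≤ ((N:ℝ) + 1) * ((H / Real.log (D + 1 : ℕ)) * E) * H + H ^ 2 * Z := by
        have h1 : V ≤ H / Real.log (D + 1 : ℕ) := by
          rw [le_div_iff₀ hlog, mul_comm]; exact hVH
        have h2 : Z ≤ H ^ 2 * Z := le_mul_of_one_le_left hZ0 (one_le_pow₀ hH1)
        gcongr
      _ = _ := by ring
  have hS2le := le_of_mul_le_mul_left hbig (by positivity)
  rw [← Finset.sum_filter_add_sum_filter_not (Nat.primesLE N) (fun p => p ≤ D)]
  have hD4 : ((D:ℝ) + 1) * B ≤ ((D:ℝ) + 1) ^ 4 * 4 ^ Y * B := by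
    have a1 : (1:ℝ) ≤ (D:ℝ) + 1 := by linarith [(Nat.cast_nonneg D : (0:ℝ) ≤ D)]
    have a2 : (D:ℝ) + 1 ≤ ((D:ℝ) + 1) ^ 4 := le_self_pow₀ a1 (by norm_num)
    have a3 : (1:ℝ) ≤ 4 ^ Y := one_le_pow₀ (by norm_num)
    have a4 : (D:ℝ) + 1 ≤ ((D:ℝ) + 1) ^ 4 * 4 ^ Y := a2.trans (le_mul_of_one_le_right (by positivity) a3)
    gcongr
  have hfin : 3 * ((D:ℝ) + 1) ^ 4 * 4 ^ Y * B = Z + ((D:ℝ) + 1) ^ 4 * 4 ^ Y * B := by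
    rw [hZ]; ring
  linarith

lemma tk_rho_upper (c : ℤ) (Y : ℕ) :
    ∑ q ∈ Nat.primesLE Y, tkrho c q ≤ ∑ p ∈ Nat.primesLE Y, 1 / ((p:ℝ) - 1) := by
  refine Finset.sum_le_sum fun p hp => ?_
  have := tk_prime_pos (Nat.prime_of_mem_primesLE hp)
  unfold tkrho; split_ifs
  · positivity
  · exact le_rfl

lemma tk_rho_lower (c : ℤ) (hc : c ≠ 0) (Y : ℕ) :
    ∑ p ∈ Nat.primesLE Y, 1 / ((p:ℝ) - 1) - (c.natAbs + 1) ≤ ∑ q ∈ Nat.primesLE Y, tkrho c q := by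
  have h : ∀ p ∈ Nat.primesLE Y, 1 / ((p:ℝ) - 1) - tkrho c p ≤
      if (p:ℤ) ∣ c then 1 else 0 := by
    intro p hp
    have := tk_prime_pos (Nat.prime_of_mem_primesLE hp)
    unfold tkrho; split_ifs
    · rw [sub_zero, div_le_one (by linarith)]; exact this
    · simp
  have h2 := Finset.sum_le_sum h
  rw [Finset.sum_sub_distrib, ← Finset.sum_filter, Finset.sum_const, nsmul_eq_mul, mul_one] at h2
  have hcard : ((Nat.primesLE Y).filter (fun p : ℕ => (p:ℤ) ∣ c)).card ≤ c.natAbs + 1 := by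
    rw [← Finset.card_range (c.natAbs + 1)]
    refine Finset.card_le_card fun p hp => ?_
    rw [Finset.mem_filter] at hp
    have h1 : p ∣ c.natAbs := Int.natCast_dvd.1 hp.2
    have := Nat.le_of_dvd (Int.natAbs_pos.2 hc) h1
    rw [Finset.mem_range]; omega
  have hcr : (((Nat.primesLE Y).filter (fun p : ℕ => (p:ℤ) ∣ c)).card : ℝ) ≤ c.natAbs + 1 := by
    exact_mod_cast hcard
  linarith

lemma tk_pi_lower : ∀ᶠ x : ℝ in atTop,
    x ≤ 2 * ((Nat.primeCounting ⌊x⌋₊ : ℝ) * Real.log x) := by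
  have h := (Real.isLittleO_log_id_atTop).bound (c := 1/100) (by norm_num)
  filter_upwards [h, eventually_ge_atTop (100:ℝ)] with x hx hx1
  have h1 := Chebyshev.psi_ge' (x := x) (by linarith)
  have h2 := Chebyshev.psi_le_primeCounting_mul_log' x
  have h3 := Real.log_two_gt_d9
  have h4 : Real.log (x + 2) ≤ Real.log x + 1 := by
    have : x + 2 ≤ x * 2 := by linarith
    have h5 := Real.log_le_log (by linarith) this
    rw [Real.log_mul (by linarith) (by norm_num)] at h5
    have := Real.log_two_lt_d9
    linarith
  have h6 : Real.log x ≤ x / 100 := by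
    have h0 : 0 ≤ Real.log x := Real.log_nonneg (by linarith)
    simp only [id, Real.norm_eq_abs] at hx
    rw [abs_of_nonneg h0, abs_of_nonneg (by linarith)] at hx
    linarith
  nlinarith

set_option maxHeartbeats 4000000 in
lemma tk_main (c : ℤ) (hc : c ≠ 0) : ∀ᶠ x : ℝ in atTop,
    ∑ p ∈ Nat.primesLE ⌊x⌋₊,
      (∑ q ∈ Nat.primesLE ⌊Real.log (Real.log x)⌋₊, tkd c q p -
        Real.log (Real.log (Real.log (Real.log x)))) ^ 2 ≤
      66 * (Nat.primeCounting ⌊x⌋₊ : ℝ) * Real.log (Real.log (Real.log (Real.log x))) := by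
  obtain ⟨K0, hK0⟩ := tk_mertens_upper
  set K : ℝ := |K0| + (c.natAbs + 1) with hK
  have hlog := Real.tendsto_log_atTop
  have hy := hlog.comp hlog
  have hL := hlog.comp (hlog.comp hy)
  have hlogy := hlog.comp hy
  have ho1 := (isLittleO_log_rpow_atTop (show (0:ℝ) < 1/8 by norm_num)).bound (c := 1) (by norm_num)
  have ho2 := (isLittleO_log_rpow_rpow_atTop 5 (show (0:ℝ) < 1/2 by norm_num)).bound
    (c := 1/192) (by norm_num)
  filter_upwards [tk_pi_lower, hy.eventually_ge_atTop 3, hL.eventually_ge_atTop (1 + K + K ^ 2),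
    hlog.eventually_ge_atTop 1, ho1, ho2, eventually_ge_atTop (1:ℝ), hlogy.eventually_ge_atTop 1]
    with x hpi hy3 hLK hlx ho1 ho2 hx1 hly
  simp only [Function.comp] at hy3 hLK hly
  set l := Real.log x with hl
  set y := Real.log l with hydef
  set L := Real.log (Real.log y) with hLdef
  set Y := ⌊y⌋₊ with hY
  set a := x ^ ((1:ℝ)/8) with ha
  set D := ⌊a⌋₊ with hD
  set N := ⌊x⌋₊ with hN
  have hx0 : 0 < x := by linarith
  have hK0' : 0 ≤ K := by rw [hK]; positivity
  have hL1 : 1 ≤ L := by nlinarith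
  have ha1 : 1 ≤ a := Real.one_le_rpow hx1 (by norm_num)
  have ha4 : a ^ 4 = x ^ ((1:ℝ)/2) := by
    rw [ha, ← Real.rpow_natCast, ← Real.rpow_mul hx0.le]; norm_num
  have hb2 : x ^ ((1:ℝ)/2) * x ^ ((1:ℝ)/2) = x := by
    rw [← Real.rpow_add hx0]; norm_num
  have hla : l ≤ a := by
    rw [one_mul, Real.norm_of_nonneg (by linarith), Real.norm_of_nonneg (by linarith)] at ho1
    exact ho1
  have hyl : y ≤ l := by
    have := Real.log_le_sub_one_of_pos (show 0 < l by linarith)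
    linarith
  have hYD : Y ≤ D := Nat.floor_le_floor (hyl.trans hla)
  have hD1 : 1 ≤ D := Nat.le_floor (by simpa using ha1)
  have hYy : (Y:ℝ) ≤ y := Nat.floor_le (by linarith)
  have hyY : y < (Y:ℝ) + 1 := Nat.lt_floor_add_one y
  have hY2 : 2 ≤ Y := Nat.le_floor (by push_cast; linarith)
  have hY2r : (2:ℝ) ≤ Y := by exact_mod_cast hY2
  have hlogY : 0 < Real.log Y := Real.log_pos (by linarith)
  set R := ∑ q ∈ Nat.primesLE Y, tkrho c q with hR
  have hRup : R ≤ L + K := by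
    have h1 := hK0 Y hY2
    have h2 := tk_rho_upper c Y
    have h3 : Real.log (Real.log Y) ≤ L :=
      Real.log_le_log hlogY (Real.log_le_log (by linarith) hYy)
    have h4 := le_abs_self K0
    have : (0:ℝ) ≤ (c.natAbs : ℝ) + 1 := by positivity
    linarith
  have hRlo : L - K ≤ R := by
    have h1 := tk_mertens_lower Y (by omega)
    have h2 := tk_rho_lower c hc Y
    have h3 : L ≤ Real.log (Real.log (Y + 1 : ℕ)) := by
      refine Real.log_le_log (by linarith) (Real.log_le_log (by linarith) ?_)
      push_cast; linarith
    have := abs_nonneg K0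
    linarith
  have hE : R + (R - L) ^ 2 ≤ 2 * L := by
    have : (R - L) ^ 2 ≤ K ^ 2 := sq_le_sq' (by linarith) (by linarith)
    linarith
  have hfin := tk_finite c Y D N L hYD hD1
  refine hfin.trans ?_
  rw [← hR]
  have hlD : l / 8 ≤ Real.log (D + 1 : ℕ) := by
    have h1 : Real.log a = l / 8 := by rw [ha, Real.log_rpow hx0]; ring
    rw [← h1]
    refine Real.log_le_log (by linarith) ?_
    push_cast
    exact (Nat.lt_floor_add_one a).le
  have hNx : (N:ℝ) + 1 ≤ 2 * x := by
    have := Nat.floor_le hx0.le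
    linarith
  have hE0 : 0 ≤ R + (R - L) ^ 2 := add_nonneg (by linarith [sq_nonneg K]) (sq_nonneg _)
  have t1 : ((N:ℝ) + 1) * (R + (R - L) ^ 2) / Real.log (D + 1 : ℕ) ≤ 32 * (x / l) * L := by
    calc _ ≤ (2 * x) * (2 * L) / (l / 8) := by gcongr
      _ = _ := by field_simp; ring
  clear_value R
  have t2 : 3 * ((D:ℝ) + 1) ^ 4 * 4 ^ Y * ((Y:ℝ) + |L|) ^ 2 ≤ x / l := by
    have hDa : (D:ℝ) ≤ a := Nat.floor_le (by linarith)
    have h1 : ((D:ℝ) + 1) ^ 4 ≤ 16 * x ^ ((1:ℝ)/2) := by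
      calc ((D:ℝ) + 1) ^ 4 ≤ (2 * a) ^ 4 := by gcongr; linarith
        _ = 16 * a ^ 4 := by ring
        _ = _ := by rw [ha4]
    have h2 : (4:ℝ) ^ Y ≤ l ^ 2 := by
      have e1 : (4:ℝ) ≤ Real.exp 2 := by
        have := Real.add_one_le_exp 1
        have e : Real.exp 2 = Real.exp 1 * Real.exp 1 := by rw [← Real.exp_add]; norm_num
        rw [e]; nlinarith
      calc (4:ℝ) ^ Y ≤ (Real.exp 2) ^ Y := by gcongr
        _ = Real.exp (Y * 2) := by rw [← Real.exp_nat_mul]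
        _ ≤ Real.exp (2 * y) := Real.exp_le_exp.2 (by linarith)
        _ = (Real.exp y) ^ 2 := by rw [← Real.exp_nat_mul]; norm_num
        _ = l ^ 2 := by rw [hydef, Real.exp_log (by linarith)]
    have hLy : L ≤ y := by
      have g1 := Real.log_le_sub_one_of_pos (show 0 < y by linarith)
      have g2 := Real.log_le_sub_one_of_pos (show 0 < Real.log y by linarith)
      linarith
    have h3 : ((Y:ℝ) + |L|) ^ 2 ≤ 4 * l ^ 2 := by
      rw [abs_of_nonneg (by linarith)]
      calc ((Y:ℝ) + L) ^ 2 ≤ (2 * l) ^ 2 := by gcongr; linarith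
        _ = _ := by ring
    have h5 : l ^ 5 ≤ 1 / 192 * x ^ ((1:ℝ)/2) := by
      have e : l ^ (5:ℝ) = l ^ 5 := by exact_mod_cast Real.rpow_natCast l 5
      rw [e, Real.norm_of_nonneg (by positivity), Real.norm_of_nonneg (by positivity)] at ho2
      exact ho2
    rw [le_div_iff₀ (by linarith)]
    calc 3 * ((D:ℝ) + 1) ^ 4 * 4 ^ Y * ((Y:ℝ) + |L|) ^ 2 * l
        ≤ 3 * (16 * x ^ ((1:ℝ)/2)) * l ^ 2 * (4 * l ^ 2) * l := by gcongr
      _ = 192 * x ^ ((1:ℝ)/2) * l ^ 5 := by ring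
      _ ≤ 192 * x ^ ((1:ℝ)/2) * (1 / 192 * x ^ ((1:ℝ)/2)) := by gcongr
      _ = x ^ ((1:ℝ)/2) * x ^ ((1:ℝ)/2) := by ring
      _ = x := hb2
  have hxl : x / l ≤ 2 * (Nat.primeCounting N : ℝ) := by
    rw [div_le_iff₀ (by linarith)]; linarith
  have hxl0 : 0 ≤ x / l := by positivity
  calc _ ≤ 32 * (x / l) * L + x / l := add_le_add t1 t2
    _ ≤ 33 * (x / l) * L := by nlinarith
    _ ≤ 33 * (2 * (Nat.primeCounting N : ℝ)) * L := by gcongr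
    _ = _ := by ring

lemma tk_omegay (y : ℝ) (n m : ℕ) (c : ℤ) (hm : m ≠ 0) (h : (m : ℤ) = (n : ℤ) - c) :
    (omegay y m : ℝ) = ∑ q ∈ Nat.primesLE ⌊y⌋₊, tkd c q n := by
  unfold tkd omegay
  rw [← Finset.sum_filter, Finset.sum_const, nsmul_eq_mul, mul_one]
  congr 2
  ext q
  simp only [Finset.mem_filter, Nat.mem_primeFactors, Nat.mem_primesLE, ← h,
    Int.natCast_dvd_natCast]
  constructor
  · rintro ⟨⟨h1, h2, h3⟩, h4⟩
    exact ⟨⟨(Nat.le_floor_iff' h1.ne_zero).2 h4, h1⟩, h2⟩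
  · rintro ⟨⟨h1, h2⟩, h3⟩
    exact ⟨⟨h2, h3, hm⟩, (Nat.le_floor_iff' h2.ne_zero).1 h1⟩

theorem turan_kubilius_type (ℓ : ℕ) (hℓ : 0 < ℓ) :
    ∃ C : ℝ, 0 < C ∧ ∀ᶠ x : ℝ in atTop,
      (∑ p ∈ (Finset.range (⌊x⌋₊ + 1)).filter (fun p => p.Prime ∧ ℓ < p),
          ((omegay (Real.log (Real.log x)) (p - ℓ) : ℝ) -
            Real.log (Real.log (Real.log (Real.log x)))) ^ 2) ≤
        C * (Nat.primeCounting ⌊x⌋₊ : ℝ) * Real.log (Real.log (Real.log (Real.log x))) ∧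
      (∑ p ∈ (Finset.range (⌊x⌋₊ + 1)).filter Nat.Prime,
          ((omegay (Real.log (Real.log x)) (p + ℓ) : ℝ) -
            Real.log (Real.log (Real.log (Real.log x)))) ^ 2) ≤
        C * (Nat.primeCounting ⌊x⌋₊ : ℝ) * Real.log (Real.log (Real.log (Real.log x))) := by
  refine ⟨66, by norm_num, ?_⟩
  filter_upwards [tk_main (ℓ : ℤ) (by omega), tk_main (-(ℓ : ℤ)) (by omega)] with x h1 h2
  constructor
  · refine le_trans ?_ h1
    refine le_trans (le_of_eq (Finset.sum_congr rfl fun p hp => ?_))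
      (Finset.sum_le_sum_of_subset_of_nonneg ?_ fun _ _ _ => sq_nonneg _)
    · have hp' := (Finset.mem_filter.1 hp).2
      rw [tk_omegay _ p (p - ℓ) ℓ (by omega) (by omega)]
    · intro p hp
      rw [Finset.mem_filter, Finset.mem_range] at hp
      exact Nat.mem_primesLE.2 ⟨by omega, hp.2.1⟩
  · refine le_trans (le_of_eq ?_) h2
    rw [Nat.primesLE_eq_filter_range]
    refine Finset.sum_congr rfl fun p _ => ?_
    rw [tk_omegay _ p (p + ℓ) (-(ℓ:ℤ)) (by omega) (by push_cast; ring)]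
end
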